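/- Let d ≥ 1, γ ∈ (0,2), α > 0, and let f : ℝ^d → [0,∞) be continuous, radially symmetric, and such that for some ζ > 0 the map z ↦ f(z) − ζ|z|^γ is quasi-convex. If ξ ∈ (0, γ/2), then lim_{t→∞} E^{P̂_{α,2^t,f,ξ}}[|x_{2^t}|²] = 0, the expectations being over paths on [0, 2^t]. -/

import Mathlib

/-!
The path is discretised, so that Wiener measure becomes a Gaussian weight in the increments
(`IsWienerMeasure.map_gridIncr`), and the interaction becomes a product of factors
`exp(-a f(x_i - x_j))`, one for each pair of grid times.

*Damping.* A Gaussian weight multiplied by even quasi-concave factors has smaller even moments than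
the Gaussian alone (`lintegral_pow_mul_le`). For the indicator of a symmetric convex set this
holds because, by the Prékopa–Leindler inequality, parallel sections of the set shrink away from
the centre (`volume_section_antitone`, `lintegral_symmConvex_le`). A quasi-concave factor is a
mixture of such indicators, and several factors are handled one at a time (`IsDamping.mul`).

*Confined paths.* By radial symmetry, `f(z) - ζ|z|^γ` is non-decreasing in `|z|`
(`le_of_norm_le_of_quasiconvex`). For distances at most `R`, the concavity of `|z|^γ` as a function
of `|z|²` shows that `f(z) - ζ (γ/2) R^(γ-2) |z|²` is non-decreasing as well (`rpow_sub_rpow_ge`,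
`truncFactor_antitone`). On paths of diameter at most `R` one therefore splits off a Gaussian pair
interaction, and the remaining factors are even and quasi-concave, hence damping. On a time
interval of length `T`, each time interacts with the whole path with total strength of order
`R^(γ-2) T^(1-ξ)`. If this is at least of order `ε^(-2)`, the quadratic form of the resulting
Gaussian weight controls `|x_T|²/ε` (`sq_posCoord_le_confAction`), so the confined paths contribute
`O(ε)` to the second moment (`lintegral_confined_le`).

*Unconfined paths.* Damping with `f` itself gives every increment at most Brownian moments
(`lintegral_norm_pow_gibbs_le`), and dyadic chaining then shows that the paths of diameter larger
than `R` contribute at most `O(T^(p+1) / R^(2p))` for each fixed `p ≥ 3`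
(`lintegral_not_confined_le`).

These bounds are uniform in the mesh, which is sent to zero by convergence of Riemann sums and
dominated convergence (`integral_tiltedPath_le`). With `κ = γ/2 - ξ > 0`, the choice
`R = T^(1/2 + κ/4)`, `ε = T^(-κ/8)` and `p > 2/κ` makes both contributions vanish as `T → ∞`.
-/

open MeasureTheory ProbabilityTheory Real

noncomputable section

/-- Path space `C([0,∞);ℝ^d)` realized as continuous maps `ℝ → ℝ^d`. -/
abbrev PathSpace (d : ℕ) := C(ℝ, EuclideanSpace ℝ (Fin d))

instance (d : ℕ) : MeasurableSpace (PathSpace d) := borel _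
instance (d : ℕ) : BorelSpace (PathSpace d) := ⟨rfl⟩

/-- `P` is the law of standard `d`-dimensional Brownian motion started at `0`
(on the time window `[0,T]`): a centered Gaussian measure on path space with the
Brownian covariance structure `E[x_s^i x_t^j] = δ_{ij} min(s,t)`. -/
def IsWienerMeasure {d : ℕ} (T : ℝ) (P : Measure (PathSpace d)) : Prop :=
  IsProbabilityMeasure P ∧
  (∀ L : PathSpace d →L[ℝ] ℝ, ∃ v : NNReal, P.map L = gaussianReal 0 v) ∧
  (∀ s t : ℝ, s ∈ Set.Icc 0 T → t ∈ Set.Icc 0 T → ∀ i j : Fin d,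
    ∫ ω, (ω s) i * (ω t) j ∂P = if i = j then min s t else 0)

/-- The interaction energy `∫_0^T ∫_0^T f(x_t - x_s)/(1+|t-s|^ξ) ds dt`. -/
def pairEnergy {d : ℕ} (f : EuclideanSpace ℝ (Fin d) → ℝ) (ξ T : ℝ) (ω : PathSpace d) : ℝ :=
  ∫ t in Set.Icc (0:ℝ) T, ∫ s in Set.Icc (0:ℝ) T, f (ω t - ω s) / (1 + |t - s| ^ ξ)

/-- The tilted path measure `P̂_{α,T,f,ξ}`, with density proportional to
`exp(-α ∫∫ f(x_t-x_s)/(1+|t-s|^ξ))` with respect to `P`. -/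
def tiltedPath {d : ℕ} (P : Measure (PathSpace d)) (f : EuclideanSpace ℝ (Fin d) → ℝ)
    (α ξ T : ℝ) : Measure (PathSpace d) :=
  P.tilted (fun ω => -α * pairEnergy f ξ T ω)

/-! ### Prékopa–Leindler inequality on the line -/

open scoped Pointwise in
lemma volume_affine_image (a c : ℝ) (ha : 0 < a) (A : Set ℝ) :
    volume ((fun x => a * x + c) '' A) = ENNReal.ofReal a * volume A := by
  have h : (fun x => a * x + c) '' A = (fun x => x + c) '' (a • A) := by
    ext z; simp [Set.mem_smul_set, eq_add_neg_iff_add_eq]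
  rw [h, Set.image_add_right, measure_preimage_add_right, Measure.addHaar_smul]
  simp [abs_of_pos ha]

/-- Brunn–Minkowski on the line for compact sets: translates of `a • A` and `b • B` that touch in a
single point both lie in `C`. -/
lemma brunn_minkowski_compact {A B C : Set ℝ} (hA : IsCompact A) (hB : IsCompact B)
    (hA0 : A.Nonempty) (hB0 : B.Nonempty) {a b : ℝ} (ha : 0 < a) (hb : 0 < b)
    (hC : ∀ x ∈ A, ∀ y ∈ B, a * x + b * y ∈ C) :
    ENNReal.ofReal a * volume A + ENNReal.ofReal b * volume B ≤ volume C := by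
  obtain ⟨x₀, hx₀, hx₀'⟩ := hA.exists_isGreatest hA0
  obtain ⟨y₀, hy₀, hy₀'⟩ := hB.exists_isLeast hB0
  set S₁ := (fun x => a * x + b * y₀) '' A
  set S₂ := (fun y => b * y + a * x₀) '' B
  have hS₂ : IsCompact S₂ := hB.image (by fun_prop)
  have hInt : S₁ ∩ S₂ ⊆ {a * x₀ + b * y₀} := by
    rintro z ⟨⟨x, hx, rfl⟩, ⟨y, hy, hxy⟩⟩
    have h1 := mul_le_mul_of_nonneg_left (hx₀' hx) ha.le
    have h2 := mul_le_mul_of_nonneg_left (hy₀' hy) hb.le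
    simp only [Set.mem_singleton_iff] at *
    linarith
  have hae : AEDisjoint volume S₁ S₂ := measure_mono_null hInt (by simp)
  rw [← volume_affine_image a (b * y₀) ha, ← volume_affine_image b (a * x₀) hb,
    ← measure_union₀ hS₂.measurableSet.nullMeasurableSet hae]
  refine measure_mono (Set.union_subset ?_ ?_)
  · rintro _ ⟨x, hx, rfl⟩; exact hC x hx y₀ hy₀
  · rintro _ ⟨y, hy, rfl⟩; simpa [add_comm] using hC x₀ hx₀ y hy

/-- Brunn–Minkowski on the line, by inner regularity. No measurability of `C` is needed. -/
lemma brunn_minkowski_real {A B C : Set ℝ} (hA : MeasurableSet A) (hB : MeasurableSet B)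
    (hA0 : A.Nonempty) (hB0 : B.Nonempty) {a b : ℝ} (ha : 0 < a) (hb : 0 < b)
    (hC : ∀ x ∈ A, ∀ y ∈ B, a * x + b * y ∈ C) :
    ENNReal.ofReal a * volume A + ENNReal.ofReal b * volume B ≤ volume C := by
  obtain ⟨x₀, hx₀⟩ := hA0
  obtain ⟨y₀, hy₀⟩ := hB0
  have key : ∀ K L : Set ℝ, (K ⊆ A ∧ IsCompact K) → (L ⊆ B ∧ IsCompact L) →
      ENNReal.ofReal a * volume K + ENNReal.ofReal b * volume L ≤ volume C := by
    intro K L hK hL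
    refine le_trans ?_ (brunn_minkowski_compact (hK.2.insert x₀) (hL.2.insert y₀)
      (Set.insert_nonempty _ _) (Set.insert_nonempty _ _) ha hb (C := C) ?_)
    · gcongr <;> simp
    · intro x hx y hy
      exact hC x (Set.insert_subset hx₀ hK.1 hx) y (Set.insert_subset hy₀ hL.1 hy)
  have hsup : ∀ S : Set ℝ, MeasurableSet S →
      volume S = ⨆ K : {K : Set ℝ // K ⊆ S ∧ IsCompact K}, volume K.1 := by
    intro S hS
    rw [hS.measure_eq_iSup_isCompact, iSup_subtype]
    simp only [iSup_and]
  have : Nonempty {K : Set ℝ // K ⊆ A ∧ IsCompact K} := ⟨∅, by simp⟩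
  have : Nonempty {K : Set ℝ // K ⊆ B ∧ IsCompact K} := ⟨∅, by simp⟩
  rw [hsup A hA, hsup B hB, ENNReal.mul_iSup, ENNReal.mul_iSup]
  exact ENNReal.iSup_add_iSup_le fun K L => key _ _ K.2 L.2

/-- Layer-cake representation of a single extended nonnegative number. -/
lemma ennreal_eq_lintegral_indicator (c : ENNReal) :
    c = ∫⁻ t in Set.Ioi (0:ℝ), Set.indicator {t : ℝ | ENNReal.ofReal t < c} 1 t := by
  have hm : MeasurableSet {t : ℝ | ENNReal.ofReal t < c} :=
    measurableSet_lt ENNReal.measurable_ofReal measurable_const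
  rw [lintegral_indicator_one hm, Measure.restrict_apply hm]
  by_cases h : c = ⊤
  · simp [h]
  · have : {t : ℝ | ENNReal.ofReal t < c} ∩ Set.Ioi 0 = Set.Ioo 0 c.toReal := by
      ext t
      constructor
      · rintro ⟨h1, h2⟩
        have h1 : ENNReal.ofReal t < c := h1
        have h2 : 0 < t := h2
        exact ⟨h2, (ENNReal.ofReal_lt_iff_lt_toReal h2.le h).1 h1⟩
      · rintro ⟨h1, h2⟩
        exact ⟨(ENNReal.ofReal_lt_iff_lt_toReal h1.le h).2 h2, h1⟩
    rw [this]; simp [h]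

/-- Layer-cake formula against a second weight `φ`. -/
lemma lintegral_mul_layercake {α : Type*} [MeasurableSpace α] (μ : Measure α) [SFinite μ]
    {φ f : α → ENNReal} (hφ : Measurable φ) (hf : Measurable f) :
    ∫⁻ x, φ x * f x ∂μ =
      ∫⁻ t in Set.Ioi (0:ℝ), ∫⁻ x in {x | ENNReal.ofReal t < f x}, φ x ∂μ := by
  have hms : MeasurableSet {p : α × ℝ | ENNReal.ofReal p.2 < f p.1} :=
    measurableSet_lt (by fun_prop) (by fun_prop)
  have h1 : ∀ x, φ x * f x = ∫⁻ t in Set.Ioi (0:ℝ),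
      φ x * Set.indicator {p : α × ℝ | ENNReal.ofReal p.2 < f p.1} 1 (x, t) := by
    intro x
    rw [lintegral_const_mul]
    · congr 1
      exact ennreal_eq_lintegral_indicator (f x)
    · exact (measurable_one.indicator hms).comp (by fun_prop)
  simp_rw [h1]
  rw [lintegral_lintegral_swap]
  · refine lintegral_congr fun t => ?_
    have hm : MeasurableSet {x : α | ENNReal.ofReal t < f x} :=
      measurableSet_lt measurable_const hf
    rw [← lintegral_indicator hm]
    refine lintegral_congr fun x => ?_
    by_cases h : ENNReal.ofReal t < f x <;> simp [Set.indicator, h]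
  · refine Measurable.aemeasurable ?_
    exact (hφ.comp measurable_fst).mul (measurable_one.indicator hms)

lemma lintegral_eq_lintegral_volume_lt {f : ℝ → ENNReal} (hf : Measurable f) :
    ∫⁻ x, f x = ∫⁻ t in Set.Ioi (0:ℝ), volume {x | ENNReal.ofReal t < f x} := by
  have := lintegral_mul_layercake volume (measurable_one (α := ENNReal)) hf
  simpa using this

lemma ennreal_geom_mean_le {a b : ℝ} (ha : 0 < a) (hb : 0 < b) (hab : a + b = 1)
    (x y : ENNReal) : x ^ a * y ^ b ≤ ENNReal.ofReal a * x + ENNReal.ofReal b * y := by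
  rcases eq_or_ne x ⊤ with rfl | hx
  · simp [ENNReal.mul_top, ha]
  rcases eq_or_ne y ⊤ with rfl | hy
  · simp [ENNReal.mul_top, hb]
  lift x to NNReal using hx
  lift y to NNReal using hy
  have := NNReal.geom_mean_le_arith_mean2_weighted ⟨a, ha.le⟩ ⟨b, hb.le⟩ x y
    (NNReal.eq hab)
  rw [← ENNReal.coe_rpow_of_nonneg _ ha.le, ← ENNReal.coe_rpow_of_nonneg _ hb.le]
  rw [ENNReal.ofReal_eq_coe_nnreal ha.le, ENNReal.ofReal_eq_coe_nnreal hb.le]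
  exact_mod_cast this

/-- One-dimensional Prékopa–Leindler inequality for functions with supremum one: apply the
one-dimensional Brunn–Minkowski inequality to every superlevel set. -/
lemma prekopa_leindler_real_of_iSup_eq_one {f g h : ℝ → ENNReal} (hf : Measurable f)
    (hg : Measurable g) (hh : Measurable h) {a b : ℝ} (ha : 0 < a) (hb : 0 < b)
    (hab : a + b = 1) (H : ∀ x y, f x ^ a * g y ^ b ≤ h (a * x + b * y))
    (hf1 : ⨆ x, f x = 1) (hg1 : ⨆ x, g x = 1) :
    (∫⁻ x, f x) ^ a * (∫⁻ x, g x) ^ b ≤ ∫⁻ x, h x := by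
  -- superlevel sets at heights outside `(0, 1)` do not contribute
  have hred : ∀ u : ℝ → ENNReal, Measurable u → ⨆ x, u x = 1 →
      ∫⁻ x, u x = ∫⁻ t in Set.Ioo (0:ℝ) 1, volume {x | ENNReal.ofReal t < u x} := by
    intro u hu hu1
    rw [lintegral_eq_lintegral_volume_lt hu]
    have hsub : Set.Ioo (0:ℝ) 1 ⊆ Set.Ioi 0 := fun t ht => ht.1
    rw [← lintegral_indicator measurableSet_Ioi, ← lintegral_indicator measurableSet_Ioo]
    refine lintegral_congr fun t => ?_
    by_cases ht : t ∈ Set.Ioo (0:ℝ) 1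
    · rw [Set.indicator_of_mem ht, Set.indicator_of_mem (hsub ht)]
    rw [Set.indicator_of_notMem ht]
    by_cases ht0 : t ∈ Set.Ioi (0:ℝ)
    swap
    · rw [Set.indicator_of_notMem ht0]
    rw [Set.indicator_of_mem ht0]
    have ht1' : 1 ≤ t := by
      by_contra hlt
      exact ht ⟨ht0, not_le.1 hlt⟩
    convert measure_empty (μ := (volume : Measure ℝ))
    refine Set.eq_empty_of_forall_notMem fun x hx => ?_
    have hx : ENNReal.ofReal t < u x := hx
    have h2 : u x ≤ 1 := hu1 ▸ le_iSup u x
    have h3 : (1:ENNReal) ≤ ENNReal.ofReal t := by simpa using ht1'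
    exact absurd (hx.trans_le h2) (not_lt.2 h3)
  refine (ennreal_geom_mean_le ha hb hab _ _).trans ?_
  have hmeas : ∀ u : ℝ → ENNReal, Measurable u →
      Measurable fun t : ℝ => volume {x | ENNReal.ofReal t < u x} := by
    intro u hu
    have : MeasurableSet {p : ℝ × ℝ | ENNReal.ofReal p.1 < u p.2} :=
      measurableSet_lt (by fun_prop) (by fun_prop)
    exact measurable_measure_prodMk_left this
  rw [hred f hf hf1, hred g hg hg1, lintegral_eq_lintegral_volume_lt hh,
    ← lintegral_const_mul _ (hmeas f hf), ← lintegral_const_mul _ (hmeas g hg),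
    ← lintegral_add_left ((hmeas f hf).const_mul _)]
  refine le_trans ?_ (lintegral_mono_set (s := Set.Ioo (0:ℝ) 1) fun t ht => ht.1)
  refine setLIntegral_mono' measurableSet_Ioo fun t ht => ?_
  have ht1 : ENNReal.ofReal t < 1 := by
    rw [← ENNReal.ofReal_one]
    exact (ENNReal.ofReal_lt_ofReal_iff one_pos).2 ht.2
  have hne : ∀ u : ℝ → ENNReal, ⨆ x, u x = 1 → {x | ENNReal.ofReal t < u x}.Nonempty := by
    intro u hu
    exact lt_iSup_iff.1 (hu.symm ▸ ht1)
  refine brunn_minkowski_real (measurableSet_lt measurable_const hf)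
    (measurableSet_lt measurable_const hg) (hne f hf1) (hne g hg1) ha hb ?_
  intro x hx y hy
  have hx : ENNReal.ofReal t < f x := hx
  have hy : ENNReal.ofReal t < g y := hy
  refine lt_of_lt_of_le ?_ (H x y)
  have : ENNReal.ofReal t = ENNReal.ofReal t ^ a * ENNReal.ofReal t ^ b := by
    rw [← ENNReal.rpow_add _ _ (by simpa using ht.1) ENNReal.ofReal_ne_top, hab,
      ENNReal.rpow_one]
  rw [this]
  exact ENNReal.mul_lt_mul (ENNReal.rpow_lt_rpow hx ha) (ENNReal.rpow_lt_rpow hy hb)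

/-- Bounded functions reduce to supremum one by homogeneity. -/
lemma prekopa_leindler_real_of_bounded {f g h : ℝ → ENNReal} (hf : Measurable f)
    (hg : Measurable g) (hh : Measurable h) {a b : ℝ} (ha : 0 < a) (hb : 0 < b)
    (hab : a + b = 1) (H : ∀ x y, f x ^ a * g y ^ b ≤ h (a * x + b * y))
    (hf1 : ⨆ x, f x ≠ ⊤) (hg1 : ⨆ x, g x ≠ ⊤) :
    (∫⁻ x, f x) ^ a * (∫⁻ x, g x) ^ b ≤ ∫⁻ x, h x := by
  rcases eq_or_ne (⨆ x, f x) 0 with hf0 | hf0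
  · have : f = 0 := by
      ext x; exact le_antisymm ((le_iSup f x).trans hf0.le) zero_le
    simp [this, ha]
  rcases eq_or_ne (⨆ x, g x) 0 with hg0 | hg0
  · have : g = 0 := by
      ext x; exact le_antisymm ((le_iSup g x).trans hg0.le) zero_le
    simp [this, hb]
  set u := (⨆ x, f x)⁻¹ with hu
  set v := (⨆ x, g x)⁻¹ with hv
  have hu0 : u ≠ 0 := ENNReal.inv_ne_zero.2 hf1
  have hv0 : v ≠ 0 := ENNReal.inv_ne_zero.2 hg1
  have hut : u ≠ ⊤ := ENNReal.inv_ne_top.2 hf0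
  have hvt : v ≠ ⊤ := ENNReal.inv_ne_top.2 hg0
  have key := prekopa_leindler_real_of_iSup_eq_one (f := fun x => u * f x)
    (g := fun x => v * g x) (h := fun x => (u ^ a * v ^ b) * h x) (hf.const_mul _)
    (hg.const_mul _) (hh.const_mul _) ha hb hab ?_ ?_ ?_
  · rw [lintegral_const_mul _ hf, lintegral_const_mul _ hg, lintegral_const_mul _ hh,
      ENNReal.mul_rpow_of_nonneg _ _ ha.le, ENNReal.mul_rpow_of_nonneg _ _ hb.le,
      mul_mul_mul_comm] at key
    rwa [ENNReal.mul_le_mul_iff_right] at key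
    · exact mul_ne_zero (by simp [hu0, hut, ENNReal.rpow_eq_zero_iff])
        (by simp [hv0, hvt, ENNReal.rpow_eq_zero_iff])
    · exact ENNReal.mul_ne_top (ENNReal.rpow_ne_top_of_nonneg ha.le hut)
        (ENNReal.rpow_ne_top_of_nonneg hb.le hvt)
  · intro x y
    rw [ENNReal.mul_rpow_of_nonneg _ _ ha.le, ENNReal.mul_rpow_of_nonneg _ _ hb.le,
      mul_mul_mul_comm]
    gcongr
    exact H x y
  · rw [← ENNReal.mul_iSup, hu, ENNReal.inv_mul_cancel hf0 hf1]
  · rw [← ENNReal.mul_iSup, hv, ENNReal.inv_mul_cancel hg0 hg1]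

/-- One-dimensional Prékopa–Leindler inequality. -/
lemma prekopa_leindler_real {f g h : ℝ → ENNReal} (hf : Measurable f)
    (hg : Measurable g) (hh : Measurable h) {a b : ℝ} (ha : 0 < a) (hb : 0 < b)
    (hab : a + b = 1) (H : ∀ x y, f x ^ a * g y ^ b ≤ h (a * x + b * y)) :
    (∫⁻ x, f x) ^ a * (∫⁻ x, g x) ^ b ≤ ∫⁻ x, h x := by
  -- truncate at height `n` and use monotone convergence
  have hsup : ∀ u : ℝ → ENNReal, Measurable u →
      ∫⁻ x, u x = ⨆ n : ℕ, ∫⁻ x, min (u x) n := by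
    intro u hu
    rw [← lintegral_iSup (fun n => hu.min measurable_const)]
    · refine lintegral_congr fun x => ?_
      have h1 : ⨆ n : ℕ, (n : ENNReal) = ⊤ := ENNReal.iSup_natCast
      have h2 := inf_iSup_eq (u x) (fun n : ℕ => (n : ENNReal))
      rw [h1, inf_top_eq] at h2
      exact h2
    · intro m n hmn x
      exact min_le_min_left _ (by exact_mod_cast hmn)
  have hpow : ∀ (A : ℕ → ENNReal) (c : ℝ), 0 < c → (⨆ n, A n) ^ c = ⨆ n, A n ^ c := by
    intro A c hc
    exact (ENNReal.orderIsoRpow c hc).map_iSup A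
  rw [hsup f hf, hsup g hg, hpow _ a ha, hpow _ b hb, ENNReal.iSup_mul]
  refine iSup_le fun n => ?_
  rw [ENNReal.mul_iSup]
  refine iSup_le fun m => ?_
  refine prekopa_leindler_real_of_bounded (hf.min measurable_const)
    (hg.min measurable_const) hh ha hb hab ?_ ?_ ?_
  · intro x y
    refine le_trans ?_ (H x y)
    gcongr <;> exact min_le_left _ _
  · exact ne_top_of_le_ne_top (ENNReal.natCast_ne_top n) (iSup_le fun x => min_le_right _ _)
  · exact ne_top_of_le_ne_top (ENNReal.natCast_ne_top m) (iSup_le fun x => min_le_right _ _)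

/-! ### Prékopa–Leindler inequality in `ℝⁿ` and sections of symmetric convex sets -/

lemma insertNth_zero_combo {n : ℕ} (a b s s' : ℝ) (y y' : Fin n → ℝ) :
    (Fin.insertNth (α := fun _ => ℝ) 0 (a * s + b * s') (a • y + b • y') : Fin (n + 1) → ℝ) =
      a • (Fin.insertNth (α := fun _ => ℝ) 0 s y : Fin (n + 1) → ℝ) +
      b • (Fin.insertNth (α := fun _ => ℝ) 0 s' y' : Fin (n + 1) → ℝ) := by
  ext i
  refine Fin.cases ?_ (fun j => ?_) i <;> simp

lemma lintegral_fin_succ {n : ℕ} {f : (Fin (n + 1) → ℝ) → ENNReal} (hf : Measurable f) :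
    ∫⁻ x, f x = ∫⁻ s : ℝ, ∫⁻ y : Fin n → ℝ, f (Fin.insertNth (α := fun _ => ℝ) 0 s y) := by
  have hmp := (volume_preserving_piFinSuccAbove (fun _ : Fin (n + 1) => ℝ) 0).symm
  rw [← hmp.lintegral_comp hf, Measure.volume_eq_prod, lintegral_prod]
  · rfl
  · exact (hf.comp hmp.measurable).aemeasurable

/-- Prékopa–Leindler inequality on `ℝⁿ`, by induction on the dimension. -/
lemma prekopa_leindler {n : ℕ} {f g h : (Fin n → ℝ) → ENNReal} (hf : Measurable f)
    (hg : Measurable g) (hh : Measurable h) {a b : ℝ} (ha : 0 < a) (hb : 0 < b)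
    (hab : a + b = 1) (H : ∀ x y, f x ^ a * g y ^ b ≤ h (a • x + b • y)) :
    (∫⁻ x, f x) ^ a * (∫⁻ x, g x) ^ b ≤ ∫⁻ x, h x := by
  induction n with
  | zero =>
    have hInt : ∀ u : (Fin 0 → ℝ) → ENNReal, ∫⁻ x, u x = u default := by
      intro u
      rw [volume_pi, Measure.pi_of_empty _ default, lintegral_dirac]
    rw [hInt, hInt, hInt]
    convert H default default
  | succ n ih =>
    rw [lintegral_fin_succ hf, lintegral_fin_succ hg, lintegral_fin_succ hh]
    have hins : Measurable fun p : ℝ × (Fin n → ℝ) =>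
        (Fin.insertNth (α := fun _ => ℝ) 0 p.1 p.2 : Fin (n + 1) → ℝ) :=
      (MeasurableEquiv.piFinSuccAbove (fun _ : Fin (n + 1) => ℝ) 0).symm.measurable
    have hm : ∀ u : (Fin (n + 1) → ℝ) → ENNReal, Measurable u → Measurable fun s : ℝ =>
        ∫⁻ y : Fin n → ℝ, u (Fin.insertNth (α := fun _ => ℝ) 0 s y) := by
      intro u hu
      exact Measurable.lintegral_prod_right (hu.comp hins)
    have hm' : ∀ u : (Fin (n + 1) → ℝ) → ENNReal, Measurable u → ∀ s : ℝ,
        Measurable fun y : Fin n → ℝ => u (Fin.insertNth (α := fun _ => ℝ) 0 s y) := by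
      intro u hu s
      exact hu.comp (hins.comp (measurable_const.prodMk measurable_id))
    refine prekopa_leindler_real (hm f hf) (hm g hg) (hm h hh) ha hb hab fun s s' => ?_
    refine ih (hm' f hf s) (hm' g hg s') (hm' h hh _) fun y y' => ?_
    rw [insertNth_zero_combo]
    exact H _ _

/-- Symmetric convex measurable sets. -/
def SymmConvex {V : Type*} [AddCommGroup V] [Module ℝ V] [MeasurableSpace V] (K : Set V) : Prop :=
  MeasurableSet K ∧ (∀ y ∈ K, -y ∈ K) ∧ Convex ℝ K

/-- Parallel sections of a symmetric convex set shrink away from the centre. -/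
lemma volume_section_antitone {n : ℕ} {K : Set (ℝ × (Fin n → ℝ))} (hK : SymmConvex K)
    {s v : ℝ} (hsv : |v| ≤ |s|) :
    volume (Prod.mk s ⁻¹' K) ≤ volume (Prod.mk v ⁻¹' K) := by
  obtain ⟨hm, hsymm, hconv⟩ := hK
  have hneg : volume (Prod.mk (-s) ⁻¹' K) = volume (Prod.mk s ⁻¹' K) := by
    have : Prod.mk (-s) ⁻¹' K = -(Prod.mk s ⁻¹' K) := by
      ext y
      simp only [Set.mem_preimage, Set.mem_neg]
      constructor
      · intro h; simpa using hsymm _ h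
      · intro h; simpa using hsymm _ h
    rw [this, Measure.measure_neg]
  have hms : ∀ r : ℝ, MeasurableSet (Prod.mk r ⁻¹' K) := fun r => measurable_prodMk_left hm
  rcases eq_or_lt_of_le hsv with heq | hlt
  · rcases abs_eq_abs.1 heq with rfl | rfl
    · exact le_rfl
    · rw [hneg]
  have hs : s ≠ 0 := by
    rintro rfl
    simp at hlt
    exact absurd hlt (not_lt.2 (abs_nonneg _))
  -- `v` is the convex combination of `s` and `-s` with weights `a` and `b`.
  set a := (1 + v / s) / 2 with ha_def
  set b := (1 - v / s) / 2 with hb_def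
  have hq : |v / s| < 1 := by
    rw [abs_div, div_lt_one (abs_pos.2 hs)]; exact hlt
  have ha : 0 < a := by have := (abs_lt.1 hq).1; rw [ha_def]; linarith
  have hb : 0 < b := by have := (abs_lt.1 hq).2; rw [hb_def]; linarith
  have hab : a + b = 1 := by rw [ha_def, hb_def]; ring
  have hv : a * s + b * (-s) = v := by rw [ha_def, hb_def]; field_simp; ring
  have key := prekopa_leindler (n := n)
    (f := (Prod.mk s ⁻¹' K).indicator 1) (g := (Prod.mk (-s) ⁻¹' K).indicator 1)
    (h := (Prod.mk v ⁻¹' K).indicator 1) (measurable_one.indicator (hms _))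
    (measurable_one.indicator (hms _)) (measurable_one.indicator (hms _)) ha hb hab ?_
  · rw [lintegral_indicator_one (hms _), lintegral_indicator_one (hms _),
      lintegral_indicator_one (hms _), hneg] at key
    refine le_trans ?_ key
    rw [← ENNReal.rpow_add_of_nonneg _ _ ha.le hb.le, hab, ENNReal.rpow_one]
  · intro x y
    by_cases hx : x ∈ Prod.mk s ⁻¹' K
    · by_cases hy : y ∈ Prod.mk (-s) ⁻¹' K
      · have : a • x + b • y ∈ Prod.mk v ⁻¹' K := by
          have h := hconv hx hy ha.le hb.le hab
          simp only [Prod.smul_mk, Prod.mk_add_mk, smul_eq_mul, hv] at h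
          exact h
        simp [Set.indicator_of_mem hx, Set.indicator_of_mem hy, Set.indicator_of_mem this]
      · simp [Set.indicator_of_notMem hy, hb]
    · simp [Set.indicator_of_notMem hx, ha]

/-- Chebyshev-type inequality: if `A` and `B` have the same finite mass, and `A` exceeds `B`
only outside `[-r, r]`, then weighting by a function that decreases in `|s|` favours `B`. -/
lemma lintegral_mul_le_of_crossing {A B g : ℝ → ENNReal} (hA : Measurable A) (hB : Measurable B)
    (hg : Measurable g) {r : ℝ} (hr : 0 ≤ r) (hin : ∀ s, |s| ≤ r → A s ≤ B s)
    (hout : ∀ s, r < |s| → B s ≤ A s) (hAB : ∫⁻ s, A s = ∫⁻ s, B s)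
    (hfin : ∫⁻ s, A s ≠ ⊤) (hmono : ∀ s v, |v| ≤ |s| → g s ≤ g v) :
    ∫⁻ s, A s * g s ≤ ∫⁻ s, B s * g s := by
  have hdecA : ∀ s, A s = min (A s) (B s) + (A s - B s) := by
    intro s
    rcases le_total (A s) (B s) with h | h
    · rw [min_eq_left h, tsub_eq_zero_of_le h, add_zero]
    · rw [min_eq_right h, add_tsub_cancel_of_le h]
  have hdecB : ∀ s, B s = min (A s) (B s) + (B s - A s) := by
    intro s
    rcases le_total (A s) (B s) with h | h
    · rw [min_eq_left h, add_tsub_cancel_of_le h]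
    · rw [min_eq_right h, tsub_eq_zero_of_le h, add_zero]
  have hmass : ∫⁻ s, (A s - B s) = ∫⁻ s, (B s - A s) := by
    have h1 : ∫⁻ s, A s = (∫⁻ s, min (A s) (B s)) + ∫⁻ s, (A s - B s) := by
      rw [← lintegral_add_left (hA.min hB)]
      exact lintegral_congr hdecA
    have h2 : ∫⁻ s, B s = (∫⁻ s, min (A s) (B s)) + ∫⁻ s, (B s - A s) := by
      rw [← lintegral_add_left (hA.min hB)]
      exact lintegral_congr hdecB
    have h3 : ∫⁻ s, min (A s) (B s) ≠ ⊤ :=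
      ne_top_of_le_ne_top hfin (lintegral_mono fun s => min_le_left _ _)
    rw [hAB, h2] at h1
    exact ((ENNReal.add_right_inj h3).1 h1).symm
  have e1 : ∫⁻ s, A s * g s = (∫⁻ s, min (A s) (B s) * g s) + ∫⁻ s, (A s - B s) * g s := by
    rw [← lintegral_add_left (f := fun s => min (A s) (B s) * g s) ((hA.min hB).mul hg)]
    refine lintegral_congr fun s => ?_
    rw [← add_mul, ← hdecA]
  have e2 : ∫⁻ s, B s * g s = (∫⁻ s, min (A s) (B s) * g s) + ∫⁻ s, (B s - A s) * g s := by
    rw [← lintegral_add_left (f := fun s => min (A s) (B s) * g s) ((hA.min hB).mul hg)]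
    refine lintegral_congr fun s => ?_
    rw [← add_mul, ← hdecB]
  rw [e1, e2]
  refine add_le_add_right ?_ _
  calc ∫⁻ s, (A s - B s) * g s ≤ ∫⁻ s, (A s - B s) * g r := by
        refine lintegral_mono fun s => ?_
        rcases le_or_gt |s| r with h | h
        · simp [tsub_eq_zero_of_le (hin s h)]
        · dsimp only
          gcongr
          exact hmono _ _ (by rw [abs_of_nonneg hr]; exact h.le)
    _ = ∫⁻ s, (B s - A s) * g r := by
        rw [lintegral_mul_const (f := fun s => A s - B s) _ (hA.sub hB),
          lintegral_mul_const (f := fun s => B s - A s) _ (hB.sub hA), hmass]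
    _ ≤ ∫⁻ s, (B s - A s) * g s := by
        refine lintegral_mono fun s => ?_
        rcases le_or_gt |s| r with h | h
        · dsimp only
          gcongr
          exact hmono _ _ (by rw [abs_of_nonneg hr]; exact h)
        · simp [tsub_eq_zero_of_le (hout s h)]

/-- The density `s^(2p+2) exp(-s²/(2σ))`: the left side of the Gaussian moment recursion
`E s^(2p+2) = (2p+1) σ E s^(2p)`, before normalisation. -/
def momA (σ : ℝ) (p : ℕ) (s : ℝ) : ENNReal :=
  ENNReal.ofReal (s ^ (2 * p + 2) * exp (-(s ^ 2 / (2 * σ))))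

/-- The density `(2p+1) σ s^(2p) exp(-s²/(2σ))`: the right side of the Gaussian moment recursion. -/
def momB (σ : ℝ) (p : ℕ) (s : ℝ) : ENNReal :=
  ENNReal.ofReal ((2 * p + 1) * σ * (s ^ (2 * p) * exp (-(s ^ 2 / (2 * σ)))))

lemma measurable_momA (σ : ℝ) (p : ℕ) : Measurable (momA σ p) := by unfold momA; fun_prop

lemma measurable_momB (σ : ℝ) (p : ℕ) : Measurable (momB σ p) := by unfold momB; fun_prop

lemma integrable_pow_mul_exp_neg {σ : ℝ} (hσ : 0 < σ) (n : ℕ) :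
    Integrable fun s : ℝ => s ^ n * exp (-(s ^ 2 / (2 * σ))) := by
  have hn : (-1 : ℝ) < n := by have : (0:ℝ) ≤ n := n.cast_nonneg; linarith
  have := integrable_rpow_mul_exp_neg_mul_sq (b := 1 / (2 * σ)) (by positivity) hn
  refine this.congr (Filter.Eventually.of_forall fun s => ?_)
  simp only [rpow_natCast]
  congr 2
  ring

/-- The Gaussian moment recursion, by integration by parts. -/
lemma lintegral_momA {σ : ℝ} (hσ : 0 < σ) (p : ℕ) :
    ∫⁻ s, momA σ p s = ∫⁻ s, momB σ p s ∧ ∫⁻ s, momA σ p s ≠ ⊤ := by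
  have iA := integrable_pow_mul_exp_neg hσ (2 * p + 2)
  have iB := (integrable_pow_mul_exp_neg hσ (2 * p)).const_mul ((2 * p + 1) * σ)
  have nA : ∀ s : ℝ, 0 ≤ s ^ (2 * p + 2) * exp (-(s ^ 2 / (2 * σ))) := fun s => by
    have : 0 ≤ s ^ (2 * p + 2) := Even.pow_nonneg ⟨p + 1, by ring⟩ s
    positivity
  have nB : ∀ s : ℝ, 0 ≤ (2 * p + 1) * σ * (s ^ (2 * p) * exp (-(s ^ 2 / (2 * σ)))) := fun s => by
    have : 0 ≤ s ^ (2 * p) := Even.pow_nonneg ⟨p, by ring⟩ s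
    positivity
  have hz := integral_eq_zero_of_hasDerivAt_of_integrable
    (f := fun s : ℝ => σ * (s ^ (2 * p + 1) * exp (-(s ^ 2 / (2 * σ)))))
    (f' := fun s : ℝ => (2 * p + 1) * σ * (s ^ (2 * p) * exp (-(s ^ 2 / (2 * σ)))) -
      s ^ (2 * p + 2) * exp (-(s ^ 2 / (2 * σ)))) ?_ (iB.sub iA)
      ((integrable_pow_mul_exp_neg hσ (2 * p + 1)).const_mul σ)
  · rw [integral_sub iB iA, sub_eq_zero] at hz
    unfold momA momB
    rw [← ofReal_integral_eq_lintegral_ofReal iA (Filter.Eventually.of_forall nA),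
      ← ofReal_integral_eq_lintegral_ofReal iB (Filter.Eventually.of_forall nB), hz]
    simp
  · intro s
    have h1 : HasDerivAt (fun s : ℝ => s ^ (2 * p + 1)) ((2 * p + 1 : ℕ) * s ^ (2 * p)) s := by
      simpa using hasDerivAt_pow (2 * p + 1) s
    have h2 : HasDerivAt (fun s : ℝ => -(s ^ 2 / (2 * σ))) (-(s / σ)) s := by
      have := ((hasDerivAt_pow 2 s).div_const (2 * σ)).neg
      refine this.congr_deriv ?_
      push_cast
      field_simp
    have h3 := (h1.mul h2.exp).const_mul σ
    refine h3.congr_deriv ?_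
    push_cast
    field_simp
    ring

/-- A weight that decreases in `|s|` lowers the ratio of consecutive even moments of a Gaussian:
`momA` exceeds `momB` exactly where `s² > (2p+1) σ`. -/
lemma momA_mul_le {σ : ℝ} (hσ : 0 < σ) (p : ℕ) {g : ℝ → ENNReal} (hg : Measurable g)
    (hmono : ∀ s v, |v| ≤ |s| → g s ≤ g v) :
    ∫⁻ s, momA σ p s * g s ≤ ∫⁻ s, momB σ p s * g s := by
  have hfac : ∀ s : ℝ, 0 ≤ s ^ (2 * p) * exp (-(s ^ 2 / (2 * σ))) := fun s => by
    have : 0 ≤ s ^ (2 * p) := Even.pow_nonneg ⟨p, by ring⟩ s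
    positivity
  have hc : 0 ≤ (2 * p + 1) * σ := by positivity
  refine lintegral_mul_le_of_crossing (r := √((2 * p + 1) * σ)) (measurable_momA σ p)
    (measurable_momB σ p) hg (sqrt_nonneg _)
    ?_ ?_ (lintegral_momA hσ p).1 (lintegral_momA hσ p).2 hmono
  · intro s hs
    have h2 : s ^ 2 ≤ (2 * p + 1) * σ := by
      rw [← sq_abs]; exact (le_sqrt (abs_nonneg _) hc).1 hs
    refine ENNReal.ofReal_le_ofReal ?_
    have := mul_le_mul_of_nonneg_right h2 (hfac s)
    calc _ = s ^ 2 * (s ^ (2 * p) * exp (-(s ^ 2 / (2 * σ)))) := by ring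
      _ ≤ _ := this
  · intro s hs
    have h2 : (2 * p + 1) * σ ≤ s ^ 2 := by
      rw [← sq_abs]; exact ((sqrt_lt' ((sqrt_nonneg _).trans_lt hs)).1 hs).le
    refine ENNReal.ofReal_le_ofReal ?_
    have := mul_le_mul_of_nonneg_right h2 (hfac s)
    calc _ ≤ s ^ 2 * (s ^ (2 * p) * exp (-(s ^ 2 / (2 * σ)))) := this
      _ = _ := by ring

/-! ### Gaussian damping by even quasi-concave factors -/

/-- A linear functional `u ≠ 0` can be taken as the first coordinate of a linear isomorphism. -/
lemma exists_equiv_fst_eq {V : Type*} [AddCommGroup V] [Module ℝ V] [FiniteDimensional ℝ V]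
    (u : V →ₗ[ℝ] ℝ) (hu : u ≠ 0) :
    ∃ (n : ℕ) (e : V ≃ₗ[ℝ] ℝ × (Fin n → ℝ)), ∀ y, (e y).1 = u y := by
  obtain ⟨v₀, hv₀⟩ : ∃ v, u v ≠ 0 := by
    by_contra! h
    exact hu (LinearMap.ext h)
  set v := (u v₀)⁻¹ • v₀ with hv_def
  have hv : u v = 1 := by simp [hv_def, hv₀]
  let e₁ : V ≃ₗ[ℝ] ℝ × LinearMap.ker u :=
    { toFun := fun y => (u y, ⟨y - u y • v, by simp [hv]⟩)
      map_add' := fun x y => by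
        ext
        · simp
        · simp only [map_add, Prod.snd_add, Submodule.coe_add]
          module
      map_smul' := fun c y => by
        ext
        · simp
        · simp only [map_smul, smul_eq_mul, RingHom.id_apply, Prod.smul_snd, Submodule.coe_smul]
          module
      invFun := fun p => p.1 • v + p.2.1
      left_inv := fun y => by simp
      right_inv := fun p => by
        have := p.2.2
        rw [LinearMap.mem_ker] at this
        ext <;> simp [hv, this] }
  let b := Module.finBasis ℝ (LinearMap.ker u)
  exact ⟨_, e₁.trans ((LinearEquiv.refl ℝ ℝ).prodCongr b.equivFun), fun y => rfl⟩

/-- Restricting to a symmetric convex set lowers the ratio of consecutive even moments of a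
Gaussian weight in `u`: in coordinates with first coordinate `u`, the volume of the sections of
the set is the decreasing weight of `momA_mul_le`. -/
lemma lintegral_symmConvex_le {ι : Type*} [Fintype ι] (u : (ι → ℝ) →ₗ[ℝ] ℝ) (hu : u ≠ 0)
    {σ : ℝ} (hσ : 0 < σ) (p : ℕ) {K : Set (ι → ℝ)} (hK : SymmConvex K) :
    ∫⁻ y in K, momA σ p (u y) ≤ ∫⁻ y in K, momB σ p (u y) := by
  obtain ⟨n, e, he⟩ := exists_equiv_fst_eq u hu
  have hec : Continuous e := e.toLinearMap.continuous_of_finiteDimensional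
  have hesc : Continuous e.symm := e.symm.toLinearMap.continuous_of_finiteDimensional
  have hK' : SymmConvex (e.symm ⁻¹' K) := by
    refine ⟨hesc.measurable hK.1, fun y hy => ?_, ?_⟩
    · simpa using hK.2.1 _ hy
    · exact hK.2.2.linear_preimage e.symm.toLinearMap
  obtain ⟨c, hc⟩ : ∃ c : NNReal, (volume : Measure (ι → ℝ)).map e =
      c • ((volume : Measure ℝ).prod (volume : Measure (Fin n → ℝ))) :=
    ⟨_, Measure.isAddLeftInvariant_eq_smul _ _⟩
  have hred : ∀ A : ℝ → ENNReal, Measurable A → ∫⁻ y in K, A (u y) =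
      c * ∫⁻ s, A s * volume (Prod.mk s ⁻¹' (e.symm ⁻¹' K)) := by
    intro A hA
    have hpre : K = e ⁻¹' (e.symm ⁻¹' K) := by ext y; simp
    have h1 : ∫⁻ y in K, A (u y) =
        ∫⁻ q in e.symm ⁻¹' K, A q.1 ∂((volume : Measure (ι → ℝ)).map e) := by
      rw [setLIntegral_map (f := fun q : ℝ × (Fin n → ℝ) => A q.1) hK'.1
        (show Measurable fun q : ℝ × (Fin n → ℝ) => A q.1 from hA.comp measurable_fst) hec.measurable, ← hpre]
      simp_rw [he]
    rw [h1, hc, Measure.restrict_smul, lintegral_smul_measure, ENNReal.smul_def, smul_eq_mul]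
    congr 1
    rw [← lintegral_indicator hK'.1, lintegral_prod]
    · refine lintegral_congr fun s => ?_
      have : ∀ y : Fin n → ℝ, (e.symm ⁻¹' K).indicator (fun q => A q.1) (s, y) =
          A s * (Prod.mk s ⁻¹' (e.symm ⁻¹' K)).indicator 1 y := by
        intro y
        by_cases h : e.symm (s, y) ∈ K
        · simp [Set.indicator, h]
        · simp [Set.indicator, h]
      simp_rw [this]
      rw [lintegral_const_mul _ (measurable_one.indicator (measurable_prodMk_left hK'.1)),
        lintegral_indicator_one (measurable_prodMk_left hK'.1)]
    · exact ((hA.comp measurable_fst).indicator hK'.1).aemeasurable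
  rw [hred _ (measurable_momA σ p), hred _ (measurable_momB σ p)]
  refine mul_le_mul_right ?_ _
  exact momA_mul_le hσ p (measurable_measure_prodMk_left hK'.1)
    fun s v hsv => volume_section_antitone hK' hsv

/-- Even functions with convex superlevel sets. -/
structure IsSymmQuasiconcave {V : Type*} [AddCommGroup V] [Module ℝ V] [MeasurableSpace V]
    (W : V → ℝ) : Prop where
  measurable : Measurable W
  even : ∀ y, W (-y) = W y
  convex : ∀ c, Convex ℝ {y | c < W y}

/-- `Φ` is a damping weight for the functional `u` at scale `σ` and order `p` if, on every
symmetric convex set, the moments of `u` of orders `2p+2` and `2p` under `exp(-u²/(2σ)) Φ` have at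
most the ratio `(2p+1) σ` which they have for a centred Gaussian of variance `σ`. Carrying the set `K` along makes the class stable under products. -/
def IsDamping {ι : Type*} [Fintype ι] (u : (ι → ℝ) →ₗ[ℝ] ℝ) (σ : ℝ) (p : ℕ)
    (Φ : (ι → ℝ) → ENNReal) : Prop :=
  Measurable Φ ∧ ∀ K : Set (ι → ℝ), SymmConvex K →
    ∫⁻ y in K, momA σ p (u y) * Φ y ≤ ∫⁻ y in K, momB σ p (u y) * Φ y

section damping

variable {ι : Type*} [Fintype ι] {u : (ι → ℝ) →ₗ[ℝ] ℝ} {σ : ℝ} {p : ℕ}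

lemma measurable_linear (u : (ι → ℝ) →ₗ[ℝ] ℝ) : Measurable u :=
  u.continuous_of_finiteDimensional.measurable

lemma isDamping_one (hu : u ≠ 0) (hσ : 0 < σ) : IsDamping u σ p 1 :=
  ⟨measurable_one, fun K hK => by simpa using lintegral_symmConvex_le u hu hσ p hK⟩

/-- Damping weights are stable under even quasi-concave factors, since such a factor is a mixture
of indicators of symmetric convex sets. Products of several such factors are covered by iteration,
although they need not be quasi-concave themselves. -/
lemma IsDamping.mul {Φ : (ι → ℝ) → ENNReal} (hΦ : IsDamping u σ p Φ) {W : (ι → ℝ) → ℝ}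
    (hW : IsSymmQuasiconcave W) : IsDamping u σ p (fun y => Φ y * ENNReal.ofReal (W y)) := by
  have hWm : Measurable fun y => ENNReal.ofReal (W y) := hW.measurable.ennreal_ofReal
  refine ⟨hΦ.1.mul hWm, fun K hK => ?_⟩
  have hA : Measurable fun y => momA σ p (u y) * Φ y :=
    ((measurable_momA σ p).comp (measurable_linear u)).mul hΦ.1
  have hB : Measurable fun y => momB σ p (u y) * Φ y :=
    ((measurable_momB σ p).comp (measurable_linear u)).mul hΦ.1
  simp only [← mul_assoc]
  rw [lintegral_mul_layercake _ hA hWm, lintegral_mul_layercake _ hB hWm]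
  refine setLIntegral_mono' measurableSet_Ioi fun t ht => ?_
  have ht : 0 < t := ht
  have hset : {y | ENNReal.ofReal t < ENNReal.ofReal (W y)} = {y | t < W y} := by
    ext y
    exact ENNReal.ofReal_lt_ofReal_iff_of_nonneg ht.le
  have hm : MeasurableSet {y | t < W y} := measurableSet_lt measurable_const hW.measurable
  rw [hset, Measure.restrict_restrict hm]
  refine hΦ.2 _ ⟨hm.inter hK.1, fun y hy => ⟨?_, hK.2.1 y hy.2⟩, (hW.convex t).inter hK.2.2⟩
  have := hy.1
  change t < W (-y)
  rw [hW.even]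
  exact this

lemma IsDamping.mul_prod {Φ : (ι → ℝ) → ENNReal} (hΦ : IsDamping u σ p Φ) {κ : Type*}
    (S : Finset κ) {W : κ → (ι → ℝ) → ℝ} (hW : ∀ k ∈ S, IsSymmQuasiconcave (W k)) :
    IsDamping u σ p (fun y => Φ y * ∏ k ∈ S, ENNReal.ofReal (W k y)) := by
  classical
  induction S using Finset.induction_on with
  | empty => simpa using hΦ
  | insert k S hk ih =>
    have h1 := ih fun j hj => hW j (Finset.mem_insert_of_mem hj)
    have h2 := h1.mul (hW k (Finset.mem_insert_self _ _))
    refine (congrArg (IsDamping u σ p) ?_).mp h2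
    ext y
    rw [Finset.prod_insert hk]
    ring

end damping

/-- Quadratic forms, encoded by evenness and the parallelogram-type identity along segments; for
nonnegative forms the latter shows convexity. -/
def IsQuad {V : Type*} [AddCommGroup V] [Module ℝ V] (D : V → ℝ) : Prop :=
  (∀ y, D (-y) = D y) ∧ ∀ (x y : V) (a b : ℝ), a + b = 1 →
    D (a • x + b • y) = a * D x + b * D y - a * b * D (x - y)

namespace IsQuad
variable {V : Type*} [AddCommGroup V] [Module ℝ V]

lemma sq (u : V →ₗ[ℝ] ℝ) : IsQuad fun y => u y ^ 2 := by
  refine ⟨fun y => by simp, fun x y a b hab => ?_⟩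
  simp only [map_add, map_smul, map_sub, smul_eq_mul]
  obtain rfl : b = 1 - a := by linarith
  ring

lemma add {D E : V → ℝ} (hD : IsQuad D) (hE : IsQuad E) : IsQuad fun y => D y + E y := by
  refine ⟨fun y => by simp only [hD.1, hE.1], fun x y a b hab => ?_⟩
  simp only [hD.2 x y a b hab, hE.2 x y a b hab]
  ring

lemma const_mul {D : V → ℝ} (hD : IsQuad D) (c : ℝ) : IsQuad fun y => c * D y := by
  refine ⟨fun y => by simp only [hD.1], fun x y a b hab => ?_⟩
  simp only [hD.2 x y a b hab]
  ring

lemma sum {κ : Type*} (S : Finset κ) {D : κ → V → ℝ} (hD : ∀ k ∈ S, IsQuad (D k)) :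
    IsQuad fun y => ∑ k ∈ S, D k y := by
  classical
  induction S using Finset.induction_on with
  | empty => exact ⟨by simp, by simp⟩
  | insert k S hk ih =>
    simp_rw [Finset.sum_insert hk]
    exact (hD k (Finset.mem_insert_self _ _)).add
      (ih fun j hj => hD j (Finset.mem_insert_of_mem hj))

lemma exp_neg [MeasurableSpace V] {D : V → ℝ} (hD : IsQuad D) (h0 : ∀ y, 0 ≤ D y)
    (hm : Measurable D) : IsSymmQuasiconcave fun y => exp (-D y) := by
  refine ⟨by fun_prop, fun y => by simp only [hD.1], fun c x hx y hy a b ha hb hab => ?_⟩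
  have hx : c < exp (-D x) := hx
  have hy : c < exp (-D y) := hy
  change c < exp (-D (a • x + b • y))
  have h1 : D (a • x + b • y) ≤ max (D x) (D y) := by
    rw [hD.2 x y a b hab]
    have h2 := mul_nonneg (mul_nonneg ha hb) (h0 (x - y))
    have h3 := mul_le_mul_of_nonneg_left (le_max_left (D x) (D y)) ha
    have h4 := mul_le_mul_of_nonneg_left (le_max_right (D x) (D y)) hb
    have h5 : a * max (D x) (D y) + b * max (D x) (D y) = max (D x) (D y) := by
      rw [← add_mul, hab, one_mul]
    linarith
  rcases le_max_iff.1 h1 with h | h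
  · exact hx.trans_le (exp_le_exp.2 (neg_le_neg h))
  · exact hy.trans_le (exp_le_exp.2 (neg_le_neg h))

end IsQuad

/-- A radially nonincreasing function of a linear image is even and quasi-concave. -/
lemma isSymmQuasiconcave_of_radial {V E : Type*} [AddCommGroup V] [Module ℝ V]
    [MeasurableSpace V] [NormedAddCommGroup E] [NormedSpace ℝ E] [MeasurableSpace E]
    {w : E → ℝ} (hwm : Measurable w) (hw : ∀ z z', ‖z‖ ≤ ‖z'‖ → w z' ≤ w z)
    (L : V →ₗ[ℝ] E) (hL : Measurable L) : IsSymmQuasiconcave fun y => w (L y) := by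
  refine ⟨hwm.comp hL, fun y => ?_, fun c x hx y hy a b ha hb hab => ?_⟩
  · exact le_antisymm (hw _ _ (by simp)) (hw _ _ (by simp))
  · have hx : c < w (L x) := hx
    have hy : c < w (L y) := hy
    change c < w (L (a • x + b • y))
    have h1 : ‖L (a • x + b • y)‖ ≤ max ‖L x‖ ‖L y‖ := by
      rw [map_add, map_smul, map_smul]
      refine (norm_add_le _ _).trans ?_
      rw [norm_smul, norm_smul, norm_of_nonneg ha, norm_of_nonneg hb]
      have h3 := mul_le_mul_of_nonneg_left (le_max_left ‖L x‖ ‖L y‖) ha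
      have h4 := mul_le_mul_of_nonneg_left (le_max_right ‖L x‖ ‖L y‖) hb
      have h5 : a * max ‖L x‖ ‖L y‖ + b * max ‖L x‖ ‖L y‖ = max ‖L x‖ ‖L y‖ := by
        rw [← add_mul, hab, one_mul]
      linarith
    rcases le_max_iff.1 h1 with h | h
    · exact hx.trans_le (hw _ _ h)
    · exact hy.trans_le (hw _ _ h)

/-! ### Grid increments of Wiener measure -/

/-- Finite products of centred Gaussians have the expected Lebesgue density. -/
lemma pi_gaussianReal {ι : Type*} [Fintype ι] {v : NNReal} (hv : v ≠ 0) :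
    Measure.pi (fun _ : ι => gaussianReal 0 v) =
      (volume : Measure (ι → ℝ)).withDensity
        (fun y => ENNReal.ofReal (∏ i, gaussianPDFReal 0 v (y i))) := by
  symm
  refine (Measure.pi_eq fun s hs => ?_).symm
  rw [withDensity_apply _ (MeasurableSet.univ_pi hs), ← lintegral_indicator (MeasurableSet.univ_pi hs)]
  have h1 : ∀ y : ι → ℝ, (Set.univ.pi s).indicator
      (fun y => ENNReal.ofReal (∏ i, gaussianPDFReal 0 v (y i))) y =
      ENNReal.ofReal (∏ i, (s i).indicator (gaussianPDFReal 0 v) (y i)) := by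
    intro y
    by_cases hy : y ∈ Set.univ.pi s
    · rw [Set.indicator_of_mem hy]
      congr 1
      refine Finset.prod_congr rfl fun i _ => ?_
      rw [Set.indicator_of_mem (hy i (Set.mem_univ i))]
    · rw [Set.indicator_of_notMem hy]
      simp only [Set.mem_pi, not_forall] at hy
      obtain ⟨i, _, hi⟩ := hy
      rw [Finset.prod_eq_zero (Finset.mem_univ i) (Set.indicator_of_notMem hi _), ENNReal.ofReal_zero]
  simp_rw [h1]
  have hInt : ∀ i, Integrable ((s i).indicator (gaussianPDFReal 0 v)) :=
    fun i => (integrable_gaussianPDFReal 0 v).indicator (hs i)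
  have h0 : ∀ i x, 0 ≤ (s i).indicator (gaussianPDFReal 0 v) x :=
    fun i x => Set.indicator_nonneg (fun x _ => gaussianPDFReal_nonneg 0 v x) x
  have hintp : Integrable (fun y : ι → ℝ => ∏ i, (s i).indicator (gaussianPDFReal 0 v) (y i)) :=
    Integrable.fintype_prod hInt
  rw [← ofReal_integral_eq_lintegral_ofReal hintp
    (Filter.Eventually.of_forall fun y => Finset.prod_nonneg fun i _ => h0 i _)]
  rw [integral_fintype_prod_volume_eq_prod,
    ENNReal.ofReal_prod_of_nonneg fun i _ => integral_nonneg (h0 i)]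
  refine Finset.prod_congr rfl fun i _ => ?_
  rw [gaussianReal_apply_eq_integral 0 hv, integral_indicator (hs i)]

/-- The coordinates of the `N` increments of a path on the grid of mesh `h`. -/
def gridIncr {d : ℕ} (N : ℕ) (h : ℝ) : PathSpace d →L[ℝ] (Fin N × Fin d → ℝ) :=
  ContinuousLinearMap.pi fun q =>
    (EuclideanSpace.proj q.2).comp
      (ContinuousMap.evalCLM ℝ (((q.1 : ℕ) + 1 : ℝ) * h) - ContinuousMap.evalCLM ℝ (((q.1 : ℕ) : ℝ) * h))

lemma gridIncr_apply {d : ℕ} (N : ℕ) (h : ℝ) (ω : PathSpace d) (q : Fin N × Fin d) :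
    gridIncr N h ω q = ω (((q.1 : ℕ) + 1 : ℝ) * h) q.2 - ω (((q.1 : ℕ) : ℝ) * h) q.2 := rfl

section wiener
variable {d : ℕ} {T : ℝ} {P : Measure (PathSpace d)}

lemma IsWienerMeasure.isGaussian (hP : IsWienerMeasure T P) : IsGaussian P :=
  isGaussian_of_map_eq_gaussianReal fun L => ⟨0, hP.2.1 L⟩

lemma IsWienerMeasure.hasGaussianLaw (hP : IsWienerMeasure T P) (L : PathSpace d →L[ℝ] ℝ) :
    HasGaussianLaw L P := by
  obtain ⟨v, hv⟩ := hP.2.1 L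
  exact ⟨by rw [hv]; infer_instance⟩

lemma IsWienerMeasure.memLp (hP : IsWienerMeasure T P) (L : PathSpace d →L[ℝ] ℝ) :
    MemLp L 2 P := (hP.hasGaussianLaw L).memLp_two

lemma IsWienerMeasure.integral_eq_zero (hP : IsWienerMeasure T P) (L : PathSpace d →L[ℝ] ℝ) :
    ∫ ω, L ω ∂P = 0 := by
  obtain ⟨v, hv⟩ := hP.2.1 L
  have h : ∫ x, x ∂(P.map L) = ∫ ω, L ω ∂P :=
    integral_map L.continuous.aemeasurable aestronglyMeasurable_id
  rw [← h, hv, integral_id_gaussianReal]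

/-- Coordinate evaluation. -/
def evalCoord (d : ℕ) (t : ℝ) (k : Fin d) : PathSpace d →L[ℝ] ℝ :=
  (EuclideanSpace.proj k).comp (ContinuousMap.evalCLM ℝ t)

lemma evalCoord_apply (t : ℝ) (k : Fin d) (ω : PathSpace d) : evalCoord d t k ω = ω t k := rfl

/-- The grid increments of Brownian motion are uncorrelated with variance `h`. -/
lemma IsWienerMeasure.integral_gridIncr (hP : IsWienerMeasure T P) {N : ℕ} {h : ℝ} (hh : 0 < h)
    (hT : N * h = T) (q r : Fin N × Fin d) :
    ∫ ω, gridIncr N h ω q * gridIncr N h ω r ∂P = if q = r then h else 0 := by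
  have hq : ((q.1 : ℕ) + 1 : ℝ) ≤ N := by exact_mod_cast q.1.2
  have hr : ((r.1 : ℕ) + 1 : ℝ) ≤ N := by exact_mod_cast r.1.2
  have hmem : ∀ a : ℝ, 0 ≤ a → a ≤ N → a * h ∈ Set.Icc 0 T := fun a ha haN =>
    ⟨mul_nonneg ha hh.le, hT ▸ mul_le_mul_of_nonneg_right haN hh.le⟩
  have hi : ∀ (s t : ℝ) (i j : Fin d), Integrable (fun ω : PathSpace d => ω s i * ω t j) P :=
    fun s t i j => (hP.memLp (evalCoord d s i)).integrable_mul (hP.memLp (evalCoord d t j))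
  have hi2 : ∀ (s t s' t' : ℝ) (i j : Fin d),
      Integrable (fun ω : PathSpace d => ω s i * ω t j - ω s' i * ω t' j) P :=
    fun s t s' t' i j => (hi s t i j).sub (hi s' t' i j)
  have q0 : (0 : ℝ) ≤ (q.1 : ℕ) := Nat.cast_nonneg _
  have r0 : (0 : ℝ) ≤ (r.1 : ℕ) := Nat.cast_nonneg _
  simp only [gridIncr_apply, sub_mul, mul_sub]
  rw [integral_sub (hi2 _ _ _ _ _ _) (hi2 _ _ _ _ _ _),
    integral_sub (hi _ _ _ _) (hi _ _ _ _), integral_sub (hi _ _ _ _) (hi _ _ _ _)]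
  rw [hP.2.2 _ _ (hmem _ (by linarith) hq) (hmem _ (by linarith) hr),
    hP.2.2 _ _ (hmem _ (by linarith) hq) (hmem _ r0 (by linarith)),
    hP.2.2 _ _ (hmem _ q0 (by linarith)) (hmem _ (by linarith) hr),
    hP.2.2 _ _ (hmem _ q0 (by linarith)) (hmem _ r0 (by linarith))]
  by_cases hk : q.2 = r.2
  · simp only [hk, if_true]
    simp only [← min_mul_of_nonneg _ _ hh.le]
    rcases lt_trichotomy (q.1 : ℕ) (r.1 : ℕ) with hlt | heq | hlt
    · have hne : q ≠ r := by rintro rfl; exact lt_irrefl _ hlt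
      have h1 : ((q.1 : ℕ) : ℝ) + 1 ≤ (r.1 : ℕ) := by exact_mod_cast hlt
      rw [if_neg hne, min_eq_left (by linarith), min_eq_left h1, min_eq_left (by linarith),
        min_eq_left (by linarith)]
      ring
    · have hne : q = r := Prod.ext (Fin.ext heq) hk
      rw [if_pos hne, heq, min_self, min_self,
        min_eq_left (show ((r.1 : ℕ) : ℝ) ≤ (r.1 : ℕ) + 1 by linarith),
        min_eq_right (show ((r.1 : ℕ) : ℝ) ≤ (r.1 : ℕ) + 1 by linarith)]
      ring
    · have hne : q ≠ r := by rintro rfl; exact lt_irrefl _ hlt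
      have h1 : ((r.1 : ℕ) : ℝ) + 1 ≤ (q.1 : ℕ) := by exact_mod_cast hlt
      rw [if_neg hne, min_eq_right (by linarith), min_eq_right h1,
        min_eq_right (by linarith), min_eq_right (by linarith)]
      ring
  · have hne : q ≠ r := by rintro rfl; exact hk rfl
    simp [hk, hne]

/-- The grid increments are independent centred Gaussians of variance `h`, being jointly Gaussian and
uncorrelated. -/
lemma IsWienerMeasure.map_gridIncr (hP : IsWienerMeasure T P) {N : ℕ} {h : ℝ} (hh : 0 < h)
    (hT : N * h = T) :
    P.map (gridIncr N h) = Measure.pi (fun _ : Fin N × Fin d => gaussianReal 0 h.toNNReal) := by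
  have := hP.1
  have := hP.isGaussian
  have hG : HasGaussianLaw (fun ω (q : Fin N × Fin d) => gridIncr N h ω q) P :=
    ⟨isGaussian_map_of_measurable (L := gridIncr N h) (gridIncr N h).continuous.measurable⟩
  have hcov : ∀ q r, cov[fun ω => gridIncr N h ω q, fun ω => gridIncr N h ω r; P] =
      if q = r then h else 0 := by
    intro q r
    rw [covariance_eq_sub]
    · have e1 := hP.integral_eq_zero ((ContinuousLinearMap.proj q).comp (gridIncr N h))
      have e2 : ∫ ω, gridIncr N h ω q ∂P = 0 := e1
      rw [e2, zero_mul, sub_zero]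
      exact hP.integral_gridIncr hh hT q r
    · exact hP.memLp ((ContinuousLinearMap.proj q).comp (gridIncr N h))
    · exact hP.memLp ((ContinuousLinearMap.proj r).comp (gridIncr N h))
  have hind : iIndepFun (fun (q : Fin N × Fin d) ω => gridIncr N h ω q) P :=
    hG.iIndepFun_of_covariance_eq_zero fun i j hij => by rw [hcov, if_neg hij]
  have hmeas : ∀ q : Fin N × Fin d, AEMeasurable (fun ω => gridIncr N h ω q) P := fun q =>
    ((ContinuousLinearMap.proj q).comp (gridIncr N h) :
      PathSpace d →L[ℝ] ℝ).continuous.aemeasurable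
  rw [iIndepFun_iff_map_fun_eq_pi_map hmeas] at hind
  refine hind.trans ?_
  congr 1
  funext q
  have hL := hP.hasGaussianLaw ((ContinuousLinearMap.proj q).comp (gridIncr N h))
  have h2 := hL.map_eq_gaussianReal
  refine h2.trans ?_
  have hv : Var[((ContinuousLinearMap.proj q).comp (gridIncr N h) : PathSpace d →L[ℝ] ℝ); P] = h := by
    rw [← covariance_self hL.aemeasurable]
    exact (hcov q q).trans (if_pos rfl)
  rw [hv, hP.integral_eq_zero]

/-- Integrating a functional of the grid increments of Brownian motion against Wiener measure
amounts to integrating it against a Gaussian weight. -/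
lemma IsWienerMeasure.lintegral_gridIncr (hP : IsWienerMeasure T P) {N : ℕ} {h : ℝ} (hh : 0 < h)
    (hT : N * h = T) : ∃ c : ENNReal, ∀ F : (Fin N × Fin d → ℝ) → ENNReal, Measurable F →
      ∫⁻ ω, F (gridIncr N h ω) ∂P =
        c * ∫⁻ y, F y * ENNReal.ofReal (exp (-(∑ q, y q ^ 2 / (2 * h)))) := by
  have hv : h.toNNReal ≠ 0 := (Real.toNNReal_pos.2 hh).ne'
  refine ⟨ENNReal.ofReal (∏ _q : Fin N × Fin d, (√(2 * π * h))⁻¹), fun F hF => ?_⟩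
  rw [← lintegral_map hF (gridIncr N h).continuous.measurable, hP.map_gridIncr hh hT,
    pi_gaussianReal hv, lintegral_withDensity_eq_lintegral_mul _ ?_ hF, ← lintegral_const_mul]
  · refine lintegral_congr fun y => ?_
    simp only [Pi.mul_apply, gaussianPDFReal_def, Real.coe_toNNReal h hh.le, sub_zero]
    rw [Finset.prod_mul_distrib, ENNReal.ofReal_mul (by positivity), ← exp_sum]
    rw [← Finset.sum_neg_distrib]
    simp only [neg_div]
    ring
  · fun_prop
  · refine Measurable.ennreal_ofReal ?_
    exact Finset.measurable_fun_prod _ fun i _ =>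
      (measurable_gaussianPDFReal 0 _).comp (measurable_pi_apply i)

/-- The covariance at time `0` forces paths to start at the origin. -/
lemma IsWienerMeasure.ae_zero (hP : IsWienerMeasure T P) (hT : 0 ≤ T) :
    ∀ᵐ ω ∂P, ω 0 = 0 := by
  have h1 : ∀ k : Fin d, ∀ᵐ ω ∂P, ω 0 k = 0 := by
    intro k
    have h2 : ∫ ω, (ω 0 k) * (ω 0 k) ∂P = 0 := by
      rw [hP.2.2 0 0 ⟨le_rfl, hT⟩ ⟨le_rfl, hT⟩, if_pos rfl, min_self]
    have h3 := (integral_eq_zero_iff_of_nonneg (fun ω => mul_self_nonneg _)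
      ((hP.memLp (evalCoord d 0 k)).integrable_mul (hP.memLp (evalCoord d 0 k)))).1 h2
    filter_upwards [h3] with ω hω
    exact mul_self_eq_zero.1 hω
  filter_upwards [ae_all_iff.2 h1] with ω hω
  ext k
  simpa using hω k

lemma IsWienerMeasure.integrable_norm_sq (hP : IsWienerMeasure T P) (t : ℝ) :
    Integrable (fun ω : PathSpace d => ‖ω t‖ ^ 2) P := by
  simp_rw [EuclideanSpace.real_norm_sq_eq]
  exact integrable_finsetSum _ fun k _ => (hP.memLp (evalCoord d t k)).integrable_sq

end wiener

/-! ### Moments under damped Gaussian weights and displacement inequalities -/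

/-- The even moments `(2p-1)!!` of a standard Gaussian. -/
def gaussMoment (p : ℕ) : ℝ := ∏ i ∈ Finset.range p, (2 * (i : ℝ) + 1)

lemma gaussMoment_pos (p : ℕ) : 0 < gaussMoment p :=
  Finset.prod_pos fun i _ => by positivity

/-- A log-quadratic weight whose quadratic form dominates `u²/(2σ)`, multiplied by even
quasi-concave factors, gives `u` at most the moments of a Gaussian of variance `σ`. -/
lemma lintegral_pow_mul_le {ι : Type*} [Fintype ι] (u : (ι → ℝ) →ₗ[ℝ] ℝ) {σ : ℝ} (hσ : 0 < σ)
    {D : (ι → ℝ) → ℝ} (hD : IsQuad D) (hDm : Measurable D) (hu : ∀ y, u y ^ 2 / (2 * σ) ≤ D y)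
    {κ : Type*} (S : Finset κ) {W : κ → (ι → ℝ) → ℝ} (hW : ∀ k ∈ S, IsSymmQuasiconcave (W k))
    (p : ℕ) :
    ∫⁻ y, ENNReal.ofReal (u y ^ (2 * p)) *
        (ENNReal.ofReal (exp (-D y)) * ∏ k ∈ S, ENNReal.ofReal (W k y)) ≤
      ENNReal.ofReal (gaussMoment p * σ ^ p) *
        ∫⁻ y, ENNReal.ofReal (exp (-D y)) * ∏ k ∈ S, ENNReal.ofReal (W k y) := by
  rcases eq_or_ne u 0 with rfl | hu0
  · rcases Nat.eq_zero_or_pos p with rfl | hp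
    · simp [gaussMoment]
    · simp [hp.ne']
  set D' : (ι → ℝ) → ℝ := fun y => D y + (-(1 / (2 * σ))) * u y ^ 2 with hD'
  have hD'q : IsQuad D' := hD.add ((IsQuad.sq u).const_mul _)
  have hD'm : Measurable D' := hDm.add (((measurable_linear u).pow_const 2).const_mul _)
  have hD'0 : ∀ y, 0 ≤ D' y := fun y => by
    have h1 := hu y
    have h2 : (1 / (2 * σ)) * u y ^ 2 = u y ^ 2 / (2 * σ) := by ring
    simp only [hD', neg_mul, h2]
    linarith
  have hdamp : ∀ p, IsDamping u σ p (fun y => (1 : (ι → ℝ) → ENNReal) y *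
      ENNReal.ofReal (exp (-D' y)) * ∏ k ∈ S, ENNReal.ofReal (W k y)) := fun p =>
    ((isDamping_one hu0 hσ).mul (hD'q.exp_neg hD'0 hD'm)).mul_prod S hW
  have hsplit : ∀ y, exp (-D y) = exp (-(u y ^ 2 / (2 * σ))) * exp (-D' y) := fun y => by
    rw [← exp_add]
    congr 1
    simp only [hD']
    ring
  have hWm : Measurable fun y => ∏ k ∈ S, ENNReal.ofReal (W k y) :=
    Finset.measurable_fun_prod _ fun k hk => (hW k hk).measurable.ennreal_ofReal
  have hEm : Measurable fun y =>
      ENNReal.ofReal (exp (-D y)) * ∏ k ∈ S, ENNReal.ofReal (W k y) :=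
    (by fun_prop : Measurable fun y => ENNReal.ofReal (exp (-D y))).mul hWm
  induction p with
  | zero => simp [gaussMoment]
  | succ p ih =>
    have h1 := (hdamp p).2 Set.univ ⟨MeasurableSet.univ, fun _ _ => trivial, convex_univ⟩
    simp only [Measure.restrict_univ, Pi.one_apply, one_mul] at h1
    have hA : ∀ y, momA σ p (u y) * (ENNReal.ofReal (exp (-D' y)) *
        ∏ k ∈ S, ENNReal.ofReal (W k y)) = ENNReal.ofReal (u y ^ (2 * (p + 1))) *
        (ENNReal.ofReal (exp (-D y)) * ∏ k ∈ S, ENNReal.ofReal (W k y)) := fun y => by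
      have e : (0 : ℝ) ≤ u y ^ (2 * (p + 1)) := (even_two_mul _).pow_nonneg _
      rw [momA, hsplit, ENNReal.ofReal_mul (exp_nonneg _),
        show 2 * p + 2 = 2 * (p + 1) by ring, ENNReal.ofReal_mul e]
      ring
    have hB : ∀ y, momB σ p (u y) * (ENNReal.ofReal (exp (-D' y)) *
        ∏ k ∈ S, ENNReal.ofReal (W k y)) = ENNReal.ofReal ((2 * p + 1) * σ) *
        (ENNReal.ofReal (u y ^ (2 * p)) *
        (ENNReal.ofReal (exp (-D y)) * ∏ k ∈ S, ENNReal.ofReal (W k y))) := fun y => by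
      have e : (0 : ℝ) ≤ u y ^ (2 * p) := (even_two_mul _).pow_nonneg _
      rw [momB, hsplit, ENNReal.ofReal_mul (exp_nonneg _), ENNReal.ofReal_mul (by positivity),
        ENNReal.ofReal_mul e]
      ring
    simp_rw [hA, hB] at h1
    refine h1.trans ?_
    rw [lintegral_const_mul]
    · refine (mul_le_mul_right ih _).trans ?_
      rw [← mul_assoc, ← ENNReal.ofReal_mul (by positivity), gaussMoment, gaussMoment,
        Finset.prod_range_succ]
      refine le_of_eq ?_
      congr 2
      ring
    · exact (((measurable_linear u).pow_const _).ennreal_ofReal).mul hEm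

/-- Cauchy–Schwarz for a telescoping sum. -/
lemma sq_sub_le_mul_sum (x : ℕ → ℝ) {i j n N : ℕ} (hij : i ≤ j) (hn : j ≤ i + n) (hN : j ≤ N) :
    (x j - x i) ^ 2 ≤ n * ∑ l ∈ Finset.range N, (x (l + 1) - x l) ^ 2 := by
  rw [← Finset.sum_Ico_sub x hij]
  refine sq_sum_le_card_mul_sum_sq.trans ?_
  rw [Nat.card_Ico]
  have h1 : ∑ l ∈ Finset.Ico i j, (x (l + 1) - x l) ^ 2 ≤
      ∑ l ∈ Finset.range N, (x (l + 1) - x l) ^ 2 :=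
    Finset.sum_le_sum_of_subset_of_nonneg
      (fun l hl => Finset.mem_range.2 ((Finset.mem_Ico.1 hl).2.trans_le hN))
      fun l _ _ => sq_nonneg _
  have h2 : ((j - i : ℕ) : ℝ) ≤ n := by exact_mod_cast (by omega : j - i ≤ n)
  exact mul_le_mul h2 h1 (Finset.sum_nonneg fun l _ => sq_nonneg _) (Nat.cast_nonneg _)

/-- The total displacement is controlled by the quadratic variation over two end blocks of
length `n` and the pair differences. -/
lemma sq_displacement_le (x : ℕ → ℝ) {n N : ℕ} (hnN : n ≤ N) :
    n * N * (x N - x 0) ^ 2 ≤ 8 * n ^ 2 * N * ∑ l ∈ Finset.range N, (x (l + 1) - x l) ^ 2 +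
      8 * ∑ i ∈ Finset.range N, ∑ j ∈ Finset.range N, (x i - x j) ^ 2 := by
  set V := ∑ l ∈ Finset.range N, (x (l + 1) - x l) ^ 2 with hV
  have key : ∀ j ∈ Finset.range N, n * (x N - x 0) ^ 2 ≤
      8 * n ^ 2 * V + 8 * ∑ i ∈ Finset.range N, (x i - x j) ^ 2 := by
    intro j _
    -- each endpoint is compared with `x j` by averaging over the block next to it
    have h1 : n * (x j - x 0) ^ 2 ≤ 2 * n ^ 2 * V + 2 * ∑ i ∈ Finset.range N, (x i - x j) ^ 2 := by
      have h2 : ∑ i ∈ Finset.range n, (x j - x 0) ^ 2 ≤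
          ∑ i ∈ Finset.range n, (2 * (n * V) + 2 * (x i - x j) ^ 2) := by
        refine Finset.sum_le_sum fun i hi => ?_
        have hi := Finset.mem_range.1 hi
        have h3 := sq_sub_le_mul_sum x (n := n) (Nat.zero_le i) (by omega) (by omega : i ≤ N)
        nlinarith [sq_nonneg ((x i - x 0) + (x i - x j))]
      rw [Finset.sum_const, Finset.sum_add_distrib, Finset.sum_const, Finset.card_range,
        ← Finset.mul_sum] at h2
      have h3 : ∑ i ∈ Finset.range n, (x i - x j) ^ 2 ≤ ∑ i ∈ Finset.range N, (x i - x j) ^ 2 :=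
        Finset.sum_le_sum_of_subset_of_nonneg (Finset.range_mono hnN) fun _ _ _ => sq_nonneg _
      simp only [nsmul_eq_mul] at h2
      nlinarith
    have h1' : n * (x N - x j) ^ 2 ≤
        2 * n ^ 2 * V + 2 * ∑ i ∈ Finset.range N, (x i - x j) ^ 2 := by
      have h2 : ∑ i ∈ Finset.Ico (N - n) N, (x N - x j) ^ 2 ≤
          ∑ i ∈ Finset.Ico (N - n) N, (2 * (n * V) + 2 * (x i - x j) ^ 2) := by
        refine Finset.sum_le_sum fun i hi => ?_
        have hi := Finset.mem_Ico.1 hi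
        have h3 := sq_sub_le_mul_sum x (n := n) hi.2.le (by omega) le_rfl
        nlinarith [sq_nonneg ((x N - x i) - (x i - x j))]
      rw [Finset.sum_const, Finset.sum_add_distrib, Finset.sum_const, Nat.card_Ico,
        ← Finset.mul_sum, Nat.sub_sub_self hnN] at h2
      have h3 : ∑ i ∈ Finset.Ico (N - n) N, (x i - x j) ^ 2 ≤
          ∑ i ∈ Finset.range N, (x i - x j) ^ 2 :=
        Finset.sum_le_sum_of_subset_of_nonneg
          (fun i hi => Finset.mem_range.2 (Finset.mem_Ico.1 hi).2) fun _ _ _ => sq_nonneg _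
      simp only [nsmul_eq_mul] at h2
      nlinarith
    have h4 : (x N - x 0) ^ 2 ≤ 2 * (x N - x j) ^ 2 + 2 * (x j - x 0) ^ 2 := by
      nlinarith [sq_nonneg ((x N - x j) - (x j - x 0))]
    have h5 := mul_le_mul_of_nonneg_left h4 (Nat.cast_nonneg (α := ℝ) n)
    linarith
  have hsum := Finset.sum_le_sum key
  rw [Finset.sum_const, Finset.sum_add_distrib, Finset.sum_const, Finset.card_range,
    ← Finset.mul_sum, Finset.sum_comm] at hsum
  simp only [nsmul_eq_mul] at hsum
  linarith

/-- Dyadic chaining: bounds `r k` on the increments over dyadic intervals of level `k` add up to a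
bound on the displacement from the start. -/
lemma norm_sub_le_of_dyadic {E : Type*} [NormedAddCommGroup E] {r : ℕ → ℝ} (hr : ∀ k, 0 ≤ r k)
    (m : ℕ) (x : ℕ → E)
    (hx : ∀ k ≤ m, ∀ j < 2 ^ k, ‖x ((j + 1) * 2 ^ (m - k)) - x (j * 2 ^ (m - k))‖ ≤ r k)
    {i : ℕ} (hi : i ≤ 2 ^ m) : ‖x i - x 0‖ ≤ ∑ k ∈ Finset.range (m + 1), r k := by
  induction m generalizing x i with
  | zero =>
    have h1 := hx 0 le_rfl 0 (by simp)
    simp only [zero_add, Finset.range_one, Finset.sum_singleton]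
    interval_cases i
    · simpa using hr 0
    · simpa using h1
  | succ m ih =>
    have ih' := fun {i : ℕ} (hi : i ≤ 2 ^ m) => ih (fun i => x (2 * i)) (i := i) (by
      intro k hk j hj
      have h1 := hx k (by omega) j hj
      have e : m + 1 - k = (m - k) + 1 := by omega
      rw [e, pow_succ] at h1
      convert h1 using 4 <;> ring) hi
    rw [Finset.sum_range_succ]
    rw [pow_succ] at hi
    rcases Nat.even_or_odd' i with ⟨c, rfl | rfl⟩
    · have h1 := ih' (i := c) (by omega)
      simp only [mul_zero] at h1
      linarith [hr (m + 1)]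
    · have h1 := ih' (i := c) (by omega)
      simp only [mul_zero] at h1
      have h2 := hx (m + 1) le_rfl (2 * c) (by rw [pow_succ]; omega)
      simp only [Nat.sub_self, pow_zero, mul_one] at h2
      calc ‖x (2 * c + 1) - x 0‖ = ‖(x (2 * c + 1) - x (2 * c)) + (x (2 * c) - x 0)‖ := by
            rw [sub_add_sub_cancel]
        _ ≤ ‖x (2 * c + 1) - x (2 * c)‖ + ‖x (2 * c) - x 0‖ := norm_add_le _ _
        _ ≤ _ := by linarith

/-! ### The discretised polymer -/

section position
variable {N d : ℕ}

/-- The `k`-th coordinate at grid time `i` of the path started at `0` with increments `y`;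
increments beyond index `N` vanish. -/
def posCoord (N d : ℕ) (i : ℕ) (k : Fin d) : (Fin N × Fin d → ℝ) →ₗ[ℝ] ℝ :=
  ∑ l ∈ Finset.range i, if h : l < N then LinearMap.proj (⟨l, h⟩, k) else 0

/-- The position at grid time `i` of the path started at `0` with increments `y`. -/
def pos (N d : ℕ) (i : ℕ) : (Fin N × Fin d → ℝ) →ₗ[ℝ] EuclideanSpace ℝ (Fin d) :=
  (WithLp.linearEquiv 2 ℝ (Fin d → ℝ)).symm.toLinearMap.comp (LinearMap.pi (posCoord N d i))

lemma pos_apply (i : ℕ) (y : Fin N × Fin d → ℝ) (k : Fin d) : pos N d i y k = posCoord N d i k y :=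
  rfl

lemma pos_zero (y : Fin N × Fin d → ℝ) : pos N d 0 y = 0 := by
  ext k
  simp [pos_apply, posCoord]

lemma posCoord_succ {l : ℕ} (hl : l < N) (k : Fin d) (y : Fin N × Fin d → ℝ) :
    posCoord N d (l + 1) k y - posCoord N d l k y = y (⟨l, hl⟩, k) := by
  simp [posCoord, Finset.sum_range_succ, hl]

lemma measurable_pos (i : ℕ) : Measurable (pos N d i) :=
  (pos N d i).continuous_of_finiteDimensional.measurable

lemma measurable_posCoord (i : ℕ) (k : Fin d) : Measurable (posCoord N d i k) :=
  measurable_linear _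

/-- Positions rebuilt from the increments of a path. -/
lemma pos_gridIncr (h : ℝ) (ω : PathSpace d) {i : ℕ} (hi : i ≤ N) :
    pos N d i (gridIncr N h ω) = ω (i * h) - ω 0 := by
  ext k
  rw [pos_apply]
  induction i with
  | zero => simp [posCoord]
  | succ i ih =>
    have h1 := posCoord_succ (show i < N from hi) k (gridIncr N h ω)
    rw [ih (by omega), gridIncr_apply] at h1
    push_cast
    simp only [PiLp.sub_apply] at h1 ⊢
    linarith

/-- The squared increments, summed coordinate by coordinate along the path. -/
lemma sum_sq_eq (y : Fin N × Fin d → ℝ) :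
    ∑ q, y q ^ 2 = ∑ k, ∑ l ∈ Finset.range N,
      (posCoord N d (l + 1) k y - posCoord N d l k y) ^ 2 := by
  rw [Fintype.sum_prod_type, Finset.sum_comm]
  refine Finset.sum_congr rfl fun k _ => ?_
  rw [Finset.sum_range]
  refine Finset.sum_congr rfl fun l _ => ?_
  rw [posCoord_succ l.2]

lemma sum_coord_le_sum_sq (y : Fin N × Fin d → ℝ) (k : Fin d) :
    ∑ l ∈ Finset.range N, (posCoord N d (l + 1) k y - posCoord N d l k y) ^ 2 ≤ ∑ q, y q ^ 2 := by
  rw [sum_sq_eq]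
  exact Finset.single_le_sum
    (f := fun k => ∑ l ∈ Finset.range N, (posCoord N d (l + 1) k y - posCoord N d l k y) ^ 2)
    (fun k _ => Finset.sum_nonneg fun l _ => sq_nonneg _) (Finset.mem_univ k)

/-- The discretised Brownian action: the exponent of the joint Gaussian density of the increments. -/
def gridAction (h : ℝ) (y : Fin N × Fin d → ℝ) : ℝ := ∑ q, y q ^ 2 / (2 * h)

lemma gridAction_eq (h : ℝ) (y : Fin N × Fin d → ℝ) :
    gridAction h y = (∑ q, y q ^ 2) / (2 * h) := by
  rw [gridAction, Finset.sum_div]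

lemma isQuad_gridAction (h : ℝ) : IsQuad (gridAction h : (Fin N × Fin d → ℝ) → ℝ) := by
  have : (gridAction h : (Fin N × Fin d → ℝ) → ℝ) =
      fun y => ∑ q, 1 / (2 * h) * ((LinearMap.proj q : (Fin N × Fin d → ℝ) →ₗ[ℝ] ℝ) y) ^ 2 := by
    funext y
    refine Finset.sum_congr rfl fun q _ => ?_
    simp only [LinearMap.proj_apply]
    ring
  rw [this]
  exact IsQuad.sum _ fun q _ => (IsQuad.sq (LinearMap.proj q : (Fin N × Fin d → ℝ) →ₗ[ℝ] ℝ)).const_mul _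

lemma measurable_gridAction (h : ℝ) : Measurable (gridAction h : (Fin N × Fin d → ℝ) → ℝ) := by
  unfold gridAction
  fun_prop

lemma isQuad_norm_pos_sub (i j : ℕ) :
    IsQuad fun y : Fin N × Fin d → ℝ => ‖pos N d i y - pos N d j y‖ ^ 2 := by
  have : (fun y : Fin N × Fin d → ℝ => ‖pos N d i y - pos N d j y‖ ^ 2) =
      fun y => ∑ k, ((posCoord N d i k - posCoord N d j k) y) ^ 2 := by
    funext y
    rw [EuclideanSpace.real_norm_sq_eq]
    rfl
  rw [this]
  exact IsQuad.sum _ fun k _ => IsQuad.sq _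

/-- The action dominates the square of each increment, with the constant of its Gaussian density:
the hypothesis of `lintegral_pow_mul_le` for the variance `n h`. -/
lemma sq_posCoord_sub_le {h : ℝ} (hh : 0 < h) (y : Fin N × Fin d → ℝ) (k : Fin d) {i n : ℕ}
    (hn : 0 < n) (hN : i + n ≤ N) :
    ((posCoord N d (i + n) k - posCoord N d i k) y) ^ 2 / (2 * (n * h)) ≤ gridAction h y := by
  have h1 := sq_sub_le_mul_sum (fun l => posCoord N d l k y) (n := n) (Nat.le_add_right i n)
    le_rfl hN
  have h2 := mul_le_mul_of_nonneg_left (sum_coord_le_sum_sq y k) (Nat.cast_nonneg (α := ℝ) n)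
  have hn' : (0 : ℝ) < n := by exact_mod_cast hn
  rw [gridAction_eq, div_le_div_iff₀ (by positivity) (by positivity), LinearMap.sub_apply]
  have h3 := mul_le_mul_of_nonneg_right (h1.trans h2) (by positivity : 0 ≤ 2 * h)
  linarith

end position

section weight
variable {N d : ℕ} {f : EuclideanSpace ℝ (Fin d) → ℝ}

/-- The unnormalised Gibbs weight of the discretised path, as a density in its increments: the
Gaussian weight times pair interactions `f` between grid times `i`, `j` of strength `a i j`. -/
def gibbs (N d : ℕ) (h : ℝ) (a : ℕ → ℕ → ℝ) (f : EuclideanSpace ℝ (Fin d) → ℝ)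
    (y : Fin N × Fin d → ℝ) : ENNReal :=
  ENNReal.ofReal (exp (-gridAction h y)) * ∏ q ∈ Finset.range N ×ˢ Finset.range N,
    ENNReal.ofReal (exp (-(a q.1 q.2 * f (pos N d q.1 y - pos N d q.2 y))))

lemma measurable_gibbs (h : ℝ) (a : ℕ → ℕ → ℝ) (hf : Measurable f) :
    Measurable (gibbs N d h a f) := by
  have h1 := measurable_gridAction (N := N) (d := d) h
  have h2 : ∀ i, Measurable (pos N d i) := measurable_pos
  unfold gibbs
  refine Measurable.mul (by fun_prop) (Finset.measurable_fun_prod _ fun q _ => ?_)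
  exact (((hf.comp ((h2 _).sub (h2 _))).const_mul _).neg.exp).ennreal_ofReal

lemma isSymmQuasiconcave_gibbs_factor (hf : Measurable f)
    (hmono : ∀ z w : EuclideanSpace ℝ (Fin d), ‖z‖ ≤ ‖w‖ → f z ≤ f w) {c : ℝ} (hc : 0 ≤ c)
    (i j : ℕ) : IsSymmQuasiconcave fun y : Fin N × Fin d → ℝ =>
      exp (-(c * f (pos N d i y - pos N d j y))) :=
  isSymmQuasiconcave_of_radial (w := fun z => exp (-(c * f z))) (by fun_prop)
    (fun z w hzw => exp_le_exp.2 (neg_le_neg (mul_le_mul_of_nonneg_left (hmono z w hzw) hc)))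
    (pos N d i - pos N d j) ((measurable_pos i).sub (measurable_pos j))

/-- `|z|^{2p}` is controlled by the coordinate moments. -/
lemma norm_pow_le_sum_coord (p : ℕ) (z : EuclideanSpace ℝ (Fin d)) :
    ‖z‖ ^ (2 * (p + 1)) ≤ (d : ℝ) ^ p * ∑ k, z k ^ (2 * (p + 1)) := by
  have h1 := pow_sum_le_card_mul_sum_pow (s := (Finset.univ : Finset (Fin d)))
    (f := fun k => z k ^ 2) (fun k _ => sq_nonneg _) p
  rw [Finset.card_univ, Fintype.card_fin] at h1
  rw [pow_mul, EuclideanSpace.real_norm_sq_eq]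
  simpa only [pow_mul] using h1

/-- The constant in the a-priori moment bound. -/
def momConst (d p : ℕ) : ℝ := (d : ℝ) ^ p * (d * gaussMoment (p + 1))

lemma momConst_nonneg (d p : ℕ) : 0 ≤ momConst d p :=
  mul_nonneg (by positivity) (mul_nonneg (by positivity) (gaussMoment_pos _).le)

/-- A-priori moments: interactions that are non-decreasing in the distance leave the increments
with at most Brownian moments, up to the dimensional constant `momConst`. -/
lemma lintegral_norm_pow_gibbs_le (hf : Measurable f)
    (hmono : ∀ z w : EuclideanSpace ℝ (Fin d), ‖z‖ ≤ ‖w‖ → f z ≤ f w) {a : ℕ → ℕ → ℝ}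
    (ha : ∀ i j, 0 ≤ a i j) {h : ℝ} (hh : 0 < h) {i n : ℕ} (hn : 0 < n) (hN : i + n ≤ N) (p : ℕ) :
    ∫⁻ y, ENNReal.ofReal (‖pos N d (i + n) y - pos N d i y‖ ^ (2 * (p + 1))) * gibbs N d h a f y ≤
      ENNReal.ofReal (momConst d p * (n * h) ^ (p + 1)) * ∫⁻ y, gibbs N d h a f y := by
  have hn' : (0 : ℝ) < n := by exact_mod_cast hn
  have hk : ∀ k : Fin d, ∫⁻ y, ENNReal.ofReal
      (((posCoord N d (i + n) k - posCoord N d i k) y) ^ (2 * (p + 1))) * gibbs N d h a f y ≤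
      ENNReal.ofReal (gaussMoment (p + 1) * (n * h) ^ (p + 1)) * ∫⁻ y, gibbs N d h a f y := fun k =>
    lintegral_pow_mul_le (posCoord N d (i + n) k - posCoord N d i k) (σ := n * h) (by positivity)
      (isQuad_gridAction h) (measurable_gridAction h) (fun y => sq_posCoord_sub_le hh y k hn hN)
      (Finset.range N ×ˢ Finset.range N)
      (fun q _ => isSymmQuasiconcave_gibbs_factor hf hmono (ha q.1 q.2) q.1 q.2) (p + 1)
  have hm := measurable_gibbs (N := N) h a hf
  have hmk : ∀ k : Fin d, Measurable fun y => ENNReal.ofReal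
      (((posCoord N d (i + n) k - posCoord N d i k) y) ^ (2 * (p + 1))) * gibbs N d h a f y :=
    fun k => (((measurable_linear _).pow_const _).ennreal_ofReal).mul hm
  calc _ ≤ ∫⁻ y, ENNReal.ofReal ((d : ℝ) ^ p) * ∑ k, ENNReal.ofReal
          (((posCoord N d (i + n) k - posCoord N d i k) y) ^ (2 * (p + 1))) * gibbs N d h a f y := by
        refine lintegral_mono fun y => ?_
        rw [← Finset.sum_mul, ← mul_assoc, ← ENNReal.ofReal_sum_of_nonneg
          fun k _ => (even_two_mul _).pow_nonneg _, ← ENNReal.ofReal_mul (by positivity)]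
        exact mul_le_mul_left (ENNReal.ofReal_le_ofReal (norm_pow_le_sum_coord p _)) _
    _ ≤ ENNReal.ofReal ((d : ℝ) ^ p) * ∑ _k : Fin d,
        ENNReal.ofReal (gaussMoment (p + 1) * (n * h) ^ (p + 1)) * ∫⁻ y, gibbs N d h a f y := by
        rw [lintegral_const_mul _ (Finset.measurable_fun_sum _ fun k _ => hmk k),
          lintegral_finsetSum _ fun k _ => hmk k]
        exact mul_le_mul_right (Finset.sum_le_sum fun k _ => hk k) _
    _ = _ := by
        have hg := (gaussMoment_pos (p + 1)).le
        rw [Finset.sum_const, Finset.card_univ, Fintype.card_fin, nsmul_eq_mul, ← mul_assoc,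
          ← mul_assoc, ← ENNReal.ofReal_natCast, ← ENNReal.ofReal_mul (by positivity),
          ← ENNReal.ofReal_mul (by positivity), momConst]
        congr 2
        ring

end weight

/-! ### Confined paths -/

/-- On `[0,R]` the power `r^γ` dominates the quadratic `(γ/2) R^{γ-2} r²` in increments. -/
lemma rpow_sub_rpow_ge {γ r s R : ℝ} (hγ0 : 0 < γ) (hγ2 : γ < 2) (hr : 0 ≤ r) (hrs : r ≤ s)
    (hsR : s ≤ R) : γ / 2 * R ^ (γ - 2) * (s ^ 2 - r ^ 2) ≤ s ^ γ - r ^ γ := by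
  rcases (hr.trans hrs).eq_or_lt with hs | hs
  · obtain rfl : r = 0 := le_antisymm (hrs.trans hs.symm.le) hr
    simp [← hs]
  have hx0 : 0 ≤ (r / s) ^ 2 := sq_nonneg _
  have hx1 : (r / s) ^ 2 ≤ 1 := pow_le_one₀ (by positivity) ((div_le_one hs).2 hrs)
  -- Bernoulli's inequality for the exponent `γ/2 ≤ 1`
  have hb := rpow_one_add_le_one_add_mul_self (s := (r / s) ^ 2 - 1) (by linarith)
    (p := γ / 2) (by linarith) (by linarith)
  rw [add_sub_cancel, ← rpow_natCast, ← rpow_mul (by positivity), div_rpow hr hs.le] at hb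
  have e1 : ((2 : ℕ) : ℝ) * (γ / 2) = γ := by push_cast; ring
  rw [e1, rpow_natCast, div_le_iff₀ (rpow_pos_of_pos hs γ)] at hb
  have e2 : s ^ γ = s ^ (γ - 2) * s ^ 2 := by
    rw [← rpow_natCast, ← rpow_add hs]
    congr 1
    push_cast
    ring
  have h1 : γ / 2 * s ^ (γ - 2) * (s ^ 2 - r ^ 2) ≤ s ^ γ - r ^ γ := by
    have e3 : (r / s) ^ 2 * s ^ γ = s ^ (γ - 2) * r ^ 2 := by
      rw [e2, div_pow]
      field_simp
    have : (1 + γ / 2 * ((r / s) ^ 2 - 1)) * s ^ γ =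
        s ^ γ + γ / 2 * ((r / s) ^ 2 * s ^ γ) - γ / 2 * s ^ γ := by ring
    rw [this, e3] at hb
    have e4 : γ / 2 * s ^ (γ - 2) * (s ^ 2 - r ^ 2) =
        γ / 2 * (s ^ (γ - 2) * s ^ 2) - γ / 2 * (s ^ (γ - 2) * r ^ 2) := by ring
    rw [e4, ← e2]
    linarith
  refine le_trans ?_ h1
  have h2 : R ^ (γ - 2) ≤ s ^ (γ - 2) := rpow_le_rpow_of_nonpos hs hsR (by linarith)
  have h3 : 0 ≤ s ^ 2 - r ^ 2 := by nlinarith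
  exact mul_le_mul_of_nonneg_right (mul_le_mul_of_nonneg_left h2 (by linarith)) h3

section truncation
variable {N d : ℕ} {f : EuclideanSpace ℝ (Fin d) → ℝ} {γ ζ : ℝ}

/-- The factor of the Gibbs weight left after restricting to displacements at most `R` and
splitting off a Gaussian pair interaction of strength `b`. -/
def truncFactor (f : EuclideanSpace ℝ (Fin d) → ℝ) (R c b : ℝ) (z : EuclideanSpace ℝ (Fin d)) : ℝ :=
  (Metric.closedBall 0 R).indicator (fun z => exp (-(c * f z - b * ‖z‖ ^ 2))) z

lemma truncFactor_nonneg (R c b : ℝ) (z : EuclideanSpace ℝ (Fin d)) : 0 ≤ truncFactor f R c b z :=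
  Set.indicator_nonneg (fun _ _ => exp_nonneg _) z

/-- After removing a Gaussian interaction of strength at most `c ζ (γ/2) R^(γ-2)`, the truncated pair
factor is still non-increasing in the distance. -/
lemma truncFactor_antitone (hγ0 : 0 < γ) (hγ2 : γ < 2)
    (hg : ∀ z w : EuclideanSpace ℝ (Fin d), ‖z‖ ≤ ‖w‖ → f z - ζ * ‖z‖ ^ γ ≤ f w - ζ * ‖w‖ ^ γ)
    (hζ : 0 ≤ ζ) {R c b : ℝ} (hc : 0 ≤ c) (hb : b ≤ c * ζ * (γ / 2) * R ^ (γ - 2))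
    (z w : EuclideanSpace ℝ (Fin d)) (hzw : ‖z‖ ≤ ‖w‖) :
    truncFactor f R c b w ≤ truncFactor f R c b z := by
  by_cases hw : ‖w‖ ≤ R
  · rw [truncFactor, truncFactor, Set.indicator_of_mem (by simpa using hw),
      Set.indicator_of_mem (by simpa using hzw.trans hw)]
    refine exp_le_exp.2 (neg_le_neg ?_)
    have h1 := mul_le_mul_of_nonneg_left (hg z w hzw) hc
    have h2 := mul_le_mul_of_nonneg_left
      (rpow_sub_rpow_ge hγ0 hγ2 (norm_nonneg z) hzw hw) (mul_nonneg hc hζ)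
    have h3 : 0 ≤ ‖w‖ ^ 2 - ‖z‖ ^ 2 := by nlinarith [norm_nonneg z]
    have h4 := mul_le_mul_of_nonneg_right hb h3
    nlinarith
  · rw [truncFactor, Set.indicator_of_notMem (by simpa using hw)]
    exact truncFactor_nonneg _ _ _ _

/-- Paths whose positions at the grid times before the last one stay within mutual distance `R`. -/
def confined (N d : ℕ) (R : ℝ) : Set (Fin N × Fin d → ℝ) :=
  {y | ∀ q ∈ Finset.range N ×ˢ Finset.range N, ‖pos N d q.1 y - pos N d q.2 y‖ ≤ R}

lemma measurableSet_confined (R : ℝ) : MeasurableSet (confined N d R) := by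
  have h2 : ∀ i, Measurable (pos N d i) := measurable_pos
  have : confined N d R = ⋂ q ∈ Finset.range N ×ˢ Finset.range N,
      {y | ‖pos N d q.1 y - pos N d q.2 y‖ ≤ R} := by
    ext y
    simp only [confined, Set.mem_ofPred_eq, Set.mem_iInter]
  rw [this]
  exact Finset.measurableSet_biInter _ fun q _ =>
    measurableSet_le ((h2 _).sub (h2 _)).norm measurable_const

/-- The quadratic part of the confined weight: action plus Gaussian pair interaction. -/
def confAction (h b : ℝ) (y : Fin N × Fin d → ℝ) : ℝ :=
  gridAction h y +
    ∑ q ∈ Finset.range N ×ˢ Finset.range N, b * ‖pos N d q.1 y - pos N d q.2 y‖ ^ 2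

lemma isQuad_confAction (h b : ℝ) : IsQuad (confAction h b : (Fin N × Fin d → ℝ) → ℝ) :=
  (isQuad_gridAction h).add (IsQuad.sum _ fun q _ => (isQuad_norm_pos_sub q.1 q.2).const_mul b)

lemma measurable_confAction (h b : ℝ) :
    Measurable (confAction h b : (Fin N × Fin d → ℝ) → ℝ) := by
  have h2 : ∀ i, Measurable (pos N d i) := measurable_pos
  exact (measurable_gridAction h).add (Finset.measurable_fun_sum _ fun q _ =>
    ((((h2 _).sub (h2 _)).norm.pow_const 2).const_mul b))

/-- On confined paths the Gibbs weight factors as Gaussian times truncated factors. -/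
lemma indicator_gibbs_eq (h : ℝ) (a : ℕ → ℕ → ℝ) (R b : ℝ) (y : Fin N × Fin d → ℝ) :
    (confined N d R).indicator (gibbs N d h a f) y = ENNReal.ofReal (exp (-confAction h b y)) *
      ∏ q ∈ Finset.range N ×ˢ Finset.range N,
        ENNReal.ofReal (truncFactor f R (a q.1 q.2) b (pos N d q.1 y - pos N d q.2 y)) := by
  by_cases hy : y ∈ confined N d R
  · rw [Set.indicator_of_mem hy, gibbs, ← ENNReal.ofReal_prod_of_nonneg fun _ _ => exp_nonneg _,
      ← ENNReal.ofReal_prod_of_nonneg fun _ _ => truncFactor_nonneg _ _ _ _,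
      ← ENNReal.ofReal_mul (exp_nonneg _), ← ENNReal.ofReal_mul (exp_nonneg _)]
    congr 1
    have h1 : ∀ q ∈ Finset.range N ×ˢ Finset.range N,
        truncFactor f R (a q.1 q.2) b (pos N d q.1 y - pos N d q.2 y) =
        exp (-(a q.1 q.2 * f (pos N d q.1 y - pos N d q.2 y)) +
          b * ‖pos N d q.1 y - pos N d q.2 y‖ ^ 2) := fun q hq => by
      rw [truncFactor, Set.indicator_of_mem (by simpa using hy q hq)]
      congr 1
      ring
    rw [Finset.prod_congr rfl h1, ← exp_sum, ← exp_sum, ← exp_add, ← exp_add,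
      Finset.sum_add_distrib, confAction]
    congr 1
    ring
  · rw [Set.indicator_of_notMem hy]
    simp only [confined, Set.mem_ofPred_eq, not_forall] at hy
    obtain ⟨q, hq, hy⟩ := hy
    rw [Finset.prod_eq_zero hq, mul_zero]
    rw [truncFactor, Set.indicator_of_notMem (by simpa using hy), ENNReal.ofReal_zero]

/-- The pair interaction pins the end point at scale `ε`: following the path freely for a time of
order `ε` at either end costs action of order `u²/ε`, and the Gaussian pair interaction forbids the
rest of the displacement `u`. -/
lemma sq_posCoord_le_confAction {h b ε T : ℝ} (hh : 0 < h) (hT : N * h = T) (hb : 0 ≤ b)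
    (hhε : h ≤ ε) (hεT : 2 * ε ≤ T) (hbT : h ^ 2 ≤ 4 * ε ^ 2 * b * T) (y : Fin N × Fin d → ℝ)
    (k : Fin d) : posCoord N d N k y ^ 2 / (2 * (16 * ε)) ≤ confAction h b y := by
  have hε : 0 < ε := hh.trans_le hhε
  have hN : (0 : ℝ) < N := by
    have : 0 < (N : ℝ) * h := by linarith
    exact pos_of_mul_pos_left this hh.le
  -- blocks of `n` steps have duration between `ε` and `2ε`
  set n := ⌈ε / h⌉₊ with hn
  have hn1 : ε ≤ n * h := (div_le_iff₀ hh).1 (Nat.le_ceil _)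
  have hn2 : n * h ≤ 2 * ε := by
    have h1 := (Nat.ceil_lt_add_one (div_pos hε hh).le).le
    have h2 := mul_le_mul_of_nonneg_right h1 hh.le
    rw [add_mul, div_mul_cancel₀ _ hh.ne'] at h2
    linarith
  have hnN : n ≤ N := by
    have : (n : ℝ) * h ≤ N * h := by linarith
    exact_mod_cast le_of_mul_le_mul_right this hh
  have hn0 : (0 : ℝ) < n := by
    have : 0 < (n : ℝ) * h := by linarith
    exact pos_of_mul_pos_left this hh.le
  have hmain := sq_displacement_le (fun l => posCoord N d l k y) hnN
  have h0 : posCoord N d 0 k y = 0 := by simp [posCoord]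
  simp only [h0, sub_zero] at hmain
  set u := posCoord N d N k y
  have hV := sum_coord_le_sum_sq y k
  set V := ∑ l ∈ Finset.range N, (posCoord N d (l + 1) k y - posCoord N d l k y) ^ 2
  have hQ : ∑ q, y q ^ 2 = 2 * h * gridAction h y := by
    rw [gridAction_eq]
    field_simp
  rw [hQ] at hV
  set Q := gridAction h y with hQdef
  have hQ0 : 0 ≤ Q := Finset.sum_nonneg fun q _ => by positivity
  have hS : ∑ i ∈ Finset.range N, ∑ j ∈ Finset.range N,
      (posCoord N d i k y - posCoord N d j k y) ^ 2 ≤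
      ∑ q ∈ Finset.range N ×ˢ Finset.range N, ‖pos N d q.1 y - pos N d q.2 y‖ ^ 2 := by
    rw [← Finset.sum_product']
    refine Finset.sum_le_sum fun q _ => ?_
    rw [EuclideanSpace.real_norm_sq_eq]
    exact Finset.single_le_sum (f := fun k => (pos N d q.1 y - pos N d q.2 y) k ^ 2)
      (fun k _ => sq_nonneg _) (Finset.mem_univ k)
  set S := ∑ q ∈ Finset.range N ×ˢ Finset.range N, ‖pos N d q.1 y - pos N d q.2 y‖ ^ 2
  have hS0 : 0 ≤ S := Finset.sum_nonneg fun q _ => by positivity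
  rw [confAction, ← Finset.mul_sum, div_le_iff₀ (by positivity), ← hQdef]
  have hnN0 : (0 : ℝ) < n * N := by positivity
  refine le_of_mul_le_mul_left ?_ hnN0
  refine hmain.trans ?_
  have e1 : 8 * (n : ℝ) ^ 2 * N * V ≤ n * N * (32 * ε * Q) := by
    calc 8 * (n : ℝ) ^ 2 * N * V ≤ 8 * (n : ℝ) ^ 2 * N * (2 * h * Q) :=
          mul_le_mul_of_nonneg_left hV (by positivity)
      _ = n * N * (16 * (n * h) * Q) := by ring
      _ ≤ n * N * (16 * (2 * ε) * Q) := by gcongr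
      _ = _ := by ring
  have e2 : 1 ≤ 4 * n * N * ε * b := by
    have h2 : 0 < h ^ 2 := by positivity
    refine le_of_mul_le_mul_right ?_ h2
    calc 1 * h ^ 2 ≤ 4 * ε * b * T * ε := by linarith
      _ ≤ 4 * ε * b * T * (n * h) := by
          have : 0 ≤ T := by linarith
          gcongr
      _ = _ := by rw [← hT]; ring
  have e3 := mul_le_mul_of_nonneg_right e2 hS0
  nlinarith

/-- The confined contribution to the second moment of the end point is `O(ε)`. -/
lemma lintegral_confined_le (hf : Measurable f) (hγ0 : 0 < γ) (hγ2 : γ < 2)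
    (hg : ∀ z w : EuclideanSpace ℝ (Fin d), ‖z‖ ≤ ‖w‖ → f z - ζ * ‖z‖ ^ γ ≤ f w - ζ * ‖w‖ ^ γ)
    (hζ : 0 ≤ ζ) {a : ℕ → ℕ → ℝ} (ha : ∀ i j, 0 ≤ a i j) {h b ε T R : ℝ}
    (hh : 0 < h) (hT : N * h = T) (hb : 0 ≤ b)
    (hba : ∀ i < N, ∀ j < N, b ≤ a i j * ζ * (γ / 2) * R ^ (γ - 2))
    (hhε : h ≤ ε) (hεT : 2 * ε ≤ T) (hbT : h ^ 2 ≤ 4 * ε ^ 2 * b * T) :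
    ∫⁻ y in confined N d R, ENNReal.ofReal (‖pos N d N y‖ ^ 2) * gibbs N d h a f y ≤
      ENNReal.ofReal (d * (16 * ε)) * ∫⁻ y, gibbs N d h a f y := by
  have hε : 0 < ε := hh.trans_le hhε
  have hA := measurableSet_confined (N := N) (d := d) R
  have hm := measurable_gibbs (N := N) h a hf
  have hfac : ∀ q ∈ Finset.range N ×ˢ Finset.range N,
      IsSymmQuasiconcave fun y : Fin N × Fin d → ℝ =>
        truncFactor f R (a q.1 q.2) b (pos N d q.1 y - pos N d q.2 y) := fun q hq => by
    have hq := Finset.mem_product.1 hq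
    refine isSymmQuasiconcave_of_radial ?_ (truncFactor_antitone hγ0 hγ2 hg hζ (ha _ _)
      (hba _ (Finset.mem_range.1 hq.1) _ (Finset.mem_range.1 hq.2))) (pos N d q.1 - pos N d q.2)
      ((measurable_pos _).sub (measurable_pos _))
    exact Measurable.indicator (by fun_prop) Metric.isClosed_closedBall.measurableSet
  have hk : ∀ k : Fin d, ∫⁻ y, ENNReal.ofReal (posCoord N d N k y ^ 2) *
      (confined N d R).indicator (gibbs N d h a f) y ≤
      ENNReal.ofReal (16 * ε) * ∫⁻ y, gibbs N d h a f y := fun k => by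
    have h1 := lintegral_pow_mul_le (posCoord N d N k) (σ := 16 * ε) (by positivity)
      (isQuad_confAction h b) (measurable_confAction h b)
      (sq_posCoord_le_confAction hh hT hb hhε hεT hbT · k) _ hfac 1
    simp_rw [← indicator_gibbs_eq h a R b, gaussMoment, mul_one, pow_one] at h1
    simp only [Finset.prod_range_one, Nat.cast_zero, mul_zero, zero_add, one_mul] at h1
    refine h1.trans (mul_le_mul_right (lintegral_mono fun y => ?_) _)
    exact Set.indicator_le_self _ _ _
  have hmk : ∀ k : Fin d, Measurable fun y => ENNReal.ofReal (posCoord N d N k y ^ 2) *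
      (confined N d R).indicator (gibbs N d h a f) y :=
    fun k => (((measurable_linear _).pow_const _).ennreal_ofReal).mul (hm.indicator hA)
  calc _ = ∫⁻ y, ∑ k, ENNReal.ofReal (posCoord N d N k y ^ 2) *
          (confined N d R).indicator (gibbs N d h a f) y := by
        rw [← lintegral_indicator hA]
        refine lintegral_congr fun y => ?_
        rw [← Finset.sum_mul, ← ENNReal.ofReal_sum_of_nonneg fun k _ => sq_nonneg _]
        by_cases hy : y ∈ confined N d R
        · simp [hy, EuclideanSpace.real_norm_sq_eq, pos_apply]
        · simp [hy]
    _ ≤ ∑ _k : Fin d, ENNReal.ofReal (16 * ε) * ∫⁻ y, gibbs N d h a f y := by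
        rw [lintegral_finsetSum _ fun k _ => hmk k]
        exact Finset.sum_le_sum fun k _ => hk k
    _ = _ := by
        rw [Finset.sum_const, Finset.card_univ, Fintype.card_fin, nsmul_eq_mul, ← mul_assoc,
          ← ENNReal.ofReal_natCast, ← ENNReal.ofReal_mul (by positivity)]

end truncation

/-! ### Unconfined paths -/

section chaining
variable {N d : ℕ} {f : EuclideanSpace ℝ (Fin d) → ℝ} {γ ζ : ℝ}

/-- The displacement allowed to dyadic increments of level `k`; these add up to at most `R/2`. -/
def dyadicRadius (R : ℝ) (k : ℕ) : ℝ := R / 10 * (4 / 5) ^ k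

lemma sum_dyadicRadius_le {R : ℝ} (hR : 0 ≤ R) (m : ℕ) :
    ∑ k ∈ Finset.range m, dyadicRadius R k ≤ R / 2 := by
  simp only [dyadicRadius]
  rw [← Finset.mul_sum, geom_sum_eq (by norm_num)]
  have : (0 : ℝ) ≤ (4 / 5) ^ m := by positivity
  have h2 : ((4 / 5 : ℝ) ^ m - 1) / (4 / 5 - 1) ≤ 5 := by
    rw [div_le_iff_of_neg (by norm_num)]
    linarith
  nlinarith

/-- Chaining: a path leaving the confinement region has a large dyadic increment. -/
lemma one_le_sum_of_not_confined {m : ℕ} {R : ℝ} (hR : 0 < R) {y : Fin (2 ^ m) × Fin d → ℝ}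
    (hy : y ∉ confined (2 ^ m) d R) (n : ℕ) :
    1 ≤ ∑ k ∈ Finset.range (m + 1), ∑ j ∈ Finset.range (2 ^ k),
      ‖pos (2 ^ m) d ((j + 1) * 2 ^ (m - k)) y - pos (2 ^ m) d (j * 2 ^ (m - k)) y‖ ^ n /
        dyadicRadius R k ^ n := by
  have hr : ∀ k, 0 < dyadicRadius R k := fun k => by unfold dyadicRadius; positivity
  by_contra! hlt
  refine hy fun q hq => ?_
  obtain ⟨h1, h2⟩ := Finset.mem_product.1 hq
  have hx : ∀ k ≤ m, ∀ j < 2 ^ k,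
      ‖pos (2 ^ m) d ((j + 1) * 2 ^ (m - k)) y - pos (2 ^ m) d (j * 2 ^ (m - k)) y‖ ≤
        dyadicRadius R k := by
    intro k hk j hj
    by_contra! hlarge
    have h3 : 1 ≤ ‖pos (2 ^ m) d ((j + 1) * 2 ^ (m - k)) y -
        pos (2 ^ m) d (j * 2 ^ (m - k)) y‖ ^ n / dyadicRadius R k ^ n := by
      rw [one_le_div (pow_pos (hr k) n)]
      exact pow_le_pow_left₀ (hr k).le hlarge.le n
    have h4 := Finset.single_le_sum (f := fun j =>
      ‖pos (2 ^ m) d ((j + 1) * 2 ^ (m - k)) y - pos (2 ^ m) d (j * 2 ^ (m - k)) y‖ ^ n /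
        dyadicRadius R k ^ n) (fun j _ => by have := hr k; positivity) (Finset.mem_range.2 hj)
    have h5 := Finset.single_le_sum (f := fun k => ∑ j ∈ Finset.range (2 ^ k),
      ‖pos (2 ^ m) d ((j + 1) * 2 ^ (m - k)) y - pos (2 ^ m) d (j * 2 ^ (m - k)) y‖ ^ n /
        dyadicRadius R k ^ n)
      (fun k _ => Finset.sum_nonneg fun j _ => by have := hr k; positivity)
      (Finset.mem_range.2 (Nat.lt_succ_of_le hk))
    linarith
  have hch : ∀ i ≤ 2 ^ m, ‖pos (2 ^ m) d i y‖ ≤ R / 2 := fun i hi => by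
    have h3 := norm_sub_le_of_dyadic (fun k => (hr k).le) m (fun i => pos (2 ^ m) d i y) hx hi
    simp only [pos_zero, sub_zero] at h3
    exact h3.trans (sum_dyadicRadius_le hR.le _)
  have h3 := hch q.1 (Finset.mem_range.1 h1).le
  have h4 := hch q.2 (Finset.mem_range.1 h2).le
  have h5 := norm_sub_le (pos (2 ^ m) d q.1 y) (pos (2 ^ m) d q.2 y)
  linarith

/-- Unconfined paths have relative Gibbs weight of order `(T/R²)^(p+1)` for every `p ≥ 3`, by
Chebyshev's inequality for the dyadic increments. -/
lemma lintegral_not_confined_le (hf : Measurable f)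
    (hmono : ∀ z w : EuclideanSpace ℝ (Fin d), ‖z‖ ≤ ‖w‖ → f z ≤ f w) {a : ℕ → ℕ → ℝ}
    (ha : ∀ i j, 0 ≤ a i j) {m : ℕ} {h T R : ℝ} (hh : 0 < h) (hT : ((2 ^ m : ℕ) : ℝ) * h = T)
    (hR : 0 < R) {p : ℕ} (hp : 3 ≤ p) :
    ∫⁻ y in (confined (2 ^ m) d R)ᶜ, gibbs (2 ^ m) d h a f y ≤
      ENNReal.ofReal (4 * momConst d p * (100 * T / R ^ 2) ^ (p + 1)) *
        ∫⁻ y, gibbs (2 ^ m) d h a f y := by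
  have hm := measurable_gibbs (N := 2 ^ m) h a hf
  have hr : ∀ k, 0 < dyadicRadius R k := fun k => by unfold dyadicRadius; positivity
  have hpos : ∀ i, Measurable (pos (2 ^ m) d i) := measurable_pos
  have hM := momConst_nonneg d p
  have hT0 : 0 < T := hT ▸ by positivity
  set Z := ∫⁻ y, gibbs (2 ^ m) d h a f y with hZ
  set Δ : ℕ → ℕ → (Fin (2 ^ m) × Fin d → ℝ) → ℝ := fun k j y =>
    ‖pos (2 ^ m) d ((j + 1) * 2 ^ (m - k)) y - pos (2 ^ m) d (j * 2 ^ (m - k)) y‖ ^ (2 * (p + 1))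
    with hΔ
  have hΔm : ∀ k j, Measurable (Δ k j) := fun k j => ((hpos _).sub (hpos _)).norm.pow_const _
  have hΔ0 : ∀ k j y, 0 ≤ Δ k j y := fun k j y => by positivity
  set ρ : ℕ → ℝ := fun k => dyadicRadius R k ^ (2 * (p + 1)) with hρ
  have hρ0 : ∀ k, 0 < ρ k := fun k => pow_pos (hr k) _
  have hterm : ∀ k ∈ Finset.range (m + 1), ∀ j ∈ Finset.range (2 ^ k),
      ∫⁻ y, ENNReal.ofReal (Δ k j y / ρ k) * gibbs (2 ^ m) d h a f y ≤
        ENNReal.ofReal (momConst d p * (100 * T / R ^ 2) ^ (p + 1) * ((25 / 32) ^ (p + 1)) ^ k)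
          * Z := by
    intro k hk j hj
    have hk : k ≤ m := Nat.lt_succ_iff.1 (Finset.mem_range.1 hk)
    have hj := Finset.mem_range.1 hj
    have e1 : j * 2 ^ (m - k) + 2 ^ (m - k) ≤ 2 ^ m := by
      calc _ = (j + 1) * 2 ^ (m - k) := by ring
        _ ≤ 2 ^ k * 2 ^ (m - k) := Nat.mul_le_mul_right _ hj
        _ = 2 ^ m := by rw [← pow_add, Nat.add_sub_cancel' hk]
    have h1 := lintegral_norm_pow_gibbs_le hf hmono ha hh (n := 2 ^ (m - k)) (by positivity) e1 p
    rw [show j * 2 ^ (m - k) + 2 ^ (m - k) = (j + 1) * 2 ^ (m - k) by ring] at h1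
    have e2 : ((2 ^ (m - k) : ℕ) : ℝ) * h = T / 2 ^ k := by
      rw [← hT, eq_div_iff (by positivity)]
      push_cast
      rw [mul_right_comm, ← pow_add, Nat.sub_add_cancel hk]
    have e3 : ∀ y, ENNReal.ofReal (Δ k j y / ρ k) * gibbs (2 ^ m) d h a f y =
        ENNReal.ofReal (1 / ρ k) * (ENNReal.ofReal (Δ k j y) * gibbs (2 ^ m) d h a f y) :=
      fun y => by
        rw [← mul_assoc, ← ENNReal.ofReal_mul (by have := hρ0 k; positivity)]
        congr 2
        ring
    simp_rw [e3]
    have hm1 : Measurable fun y => ENNReal.ofReal (Δ k j y) * gibbs (2 ^ m) d h a f y :=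
      (hΔm k j).ennreal_ofReal.mul hm
    rw [lintegral_const_mul _ hm1]
    refine (mul_le_mul_right h1 _).trans ?_
    rw [← mul_assoc, ← ENNReal.ofReal_mul (by have := hρ0 k; positivity), e2]
    refine mul_le_mul_left (ENNReal.ofReal_le_ofReal (le_of_eq ?_)) _
    have e4 : ρ k = (R ^ 2 / 100) ^ (p + 1) * ((16 / 25) ^ (p + 1)) ^ k := by
      simp only [hρ, dyadicRadius]
      rw [pow_mul, ← pow_mul (16 / 25 : ℝ), mul_comm (p + 1) k, pow_mul (16 / 25 : ℝ) k, ← mul_pow]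
      congr 1
      rw [mul_pow, ← pow_mul, mul_comm k 2, pow_mul]
      norm_num
      ring
    rw [e4, ← pow_mul (16 / 25 : ℝ), ← pow_mul (25 / 32 : ℝ), mul_comm (p + 1) k,
      pow_mul (16 / 25 : ℝ), pow_mul (25 / 32 : ℝ), ← mul_pow, mul_assoc (momConst d p), ← mul_pow,
      one_div, ← inv_pow, mul_left_comm, ← mul_pow]
    congr 2
    have e5 : (25 / 32 : ℝ) ^ k = ((16 / 25) ^ k)⁻¹ * (2 ^ k)⁻¹ := by
      rw [← inv_pow, ← inv_pow, ← mul_pow]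
      norm_num
    rw [e5]
    field_simp
  -- `p ≥ 3` makes the gain per level beat the `2 ^ k` increments of level `k`
  have hgeom : ∑ k ∈ Finset.range (m + 1), (2 * (25 / 32 : ℝ) ^ (p + 1)) ^ k ≤ 4 := by
    have h1 : 2 * (25 / 32 : ℝ) ^ (p + 1) ≤ 3 / 4 := by
      have := pow_le_pow_of_le_one (by norm_num : (0 : ℝ) ≤ 25 / 32) (by norm_num)
        (show 4 ≤ p + 1 by omega)
      have h2 : 2 * (25 / 32 : ℝ) ^ 4 ≤ 3 / 4 := by norm_num
      linarith
    have h2 : ∑ k ∈ Finset.range (m + 1), (2 * (25 / 32 : ℝ) ^ (p + 1)) ^ k ≤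
        ∑ k ∈ Finset.range (m + 1), (3 / 4 : ℝ) ^ k :=
      Finset.sum_le_sum fun k _ => pow_le_pow_left₀ (by positivity) h1 k
    refine h2.trans ?_
    rw [geom_sum_eq (by norm_num), div_le_iff_of_neg (by norm_num)]
    have : (0 : ℝ) ≤ (3 / 4) ^ (m + 1) := by positivity
    linarith
  have hmk : ∀ k j, Measurable fun y => ENNReal.ofReal (Δ k j y / ρ k) * gibbs (2 ^ m) d h a f y :=
    fun k j => ((hΔm k j).div_const _).ennreal_ofReal.mul hm
  calc ∫⁻ y in (confined (2 ^ m) d R)ᶜ, gibbs (2 ^ m) d h a f y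
      ≤ ∫⁻ y in (confined (2 ^ m) d R)ᶜ, ∑ k ∈ Finset.range (m + 1), ∑ j ∈ Finset.range (2 ^ k),
          ENNReal.ofReal (Δ k j y / ρ k) * gibbs (2 ^ m) d h a f y := by
        refine setLIntegral_mono (Finset.measurable_fun_sum _ fun k _ =>
          Finset.measurable_fun_sum _ fun j _ => hmk k j) fun y hy => ?_
        have h1 := ENNReal.ofReal_le_ofReal (one_le_sum_of_not_confined hR hy (2 * (p + 1)))
        rw [ENNReal.ofReal_one, ENNReal.ofReal_sum_of_nonneg fun k _ =>
          Finset.sum_nonneg fun j _ => div_nonneg (hΔ0 k j y) (hρ0 k).le] at h1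
        simp_rw [← Finset.sum_mul]
        refine le_trans (le_of_eq (one_mul _).symm) (mul_le_mul_left (h1.trans (le_of_eq ?_)) _)
        refine Finset.sum_congr rfl fun k _ => ?_
        rw [ENNReal.ofReal_sum_of_nonneg fun j _ => div_nonneg (hΔ0 k j y) (hρ0 k).le]
    _ ≤ ∫⁻ y, ∑ k ∈ Finset.range (m + 1), ∑ j ∈ Finset.range (2 ^ k),
          ENNReal.ofReal (Δ k j y / ρ k) * gibbs (2 ^ m) d h a f y :=
        setLIntegral_le_lintegral _ _
    _ = ∑ k ∈ Finset.range (m + 1), ∑ j ∈ Finset.range (2 ^ k),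
          ∫⁻ y, ENNReal.ofReal (Δ k j y / ρ k) * gibbs (2 ^ m) d h a f y := by
        rw [lintegral_finsetSum _ fun k _ => Finset.measurable_fun_sum _ fun j _ => hmk k j]
        exact Finset.sum_congr rfl fun k _ => lintegral_finsetSum _ fun j _ => hmk k j
    _ ≤ ∑ k ∈ Finset.range (m + 1), ∑ _j ∈ Finset.range (2 ^ k), ENNReal.ofReal
          (momConst d p * (100 * T / R ^ 2) ^ (p + 1) * ((25 / 32) ^ (p + 1)) ^ k) * Z :=
        Finset.sum_le_sum fun k hk => Finset.sum_le_sum fun j hj => hterm k hk j hj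
    _ = ENNReal.ofReal (momConst d p * (100 * T / R ^ 2) ^ (p + 1) *
          ∑ k ∈ Finset.range (m + 1), (2 * (25 / 32 : ℝ) ^ (p + 1)) ^ k) * Z := by
        rw [Finset.mul_sum, ENNReal.ofReal_sum_of_nonneg fun k _ => by positivity, Finset.sum_mul]
        refine Finset.sum_congr rfl fun k _ => ?_
        rw [Finset.sum_const, Finset.card_range, nsmul_eq_mul, ← mul_assoc,
          ← ENNReal.ofReal_natCast, ← ENNReal.ofReal_mul (by positivity)]
        congr 2
        push_cast
        rw [mul_pow]
        ring
    _ ≤ _ := by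
        refine mul_le_mul_left (ENNReal.ofReal_le_ofReal ?_) _
        have h1 := mul_le_mul_of_nonneg_left hgeom
          (by positivity : 0 ≤ momConst d p * (100 * T / R ^ 2) ^ (p + 1))
        linarith

/-- The constant in front of the contribution of unconfined paths. -/
def tailConst (d p : ℕ) : ℝ := momConst d p * (4 * 100 ^ (p + 1) + 1)

lemma tailConst_nonneg (d p : ℕ) : 0 ≤ tailConst d p :=
  mul_nonneg (momConst_nonneg d p) (by positivity)

/-- Second moment of the end point of the discretised polymer: confined and unconfined parts. -/
lemma lintegral_norm_sq_gibbs_le (hf : Measurable f) (hγ0 : 0 < γ) (hγ2 : γ < 2)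
    (hmono : ∀ z w : EuclideanSpace ℝ (Fin d), ‖z‖ ≤ ‖w‖ → f z ≤ f w)
    (hg : ∀ z w : EuclideanSpace ℝ (Fin d), ‖z‖ ≤ ‖w‖ → f z - ζ * ‖z‖ ^ γ ≤ f w - ζ * ‖w‖ ^ γ)
    (hζ : 0 ≤ ζ) {a : ℕ → ℕ → ℝ} (ha : ∀ i j, 0 ≤ a i j) {m : ℕ} {h b ε T R : ℝ}
    (hh : 0 < h) (hT : ((2 ^ m : ℕ) : ℝ) * h = T) (hR : 0 < R) (hb : 0 ≤ b)
    (hba : ∀ i < 2 ^ m, ∀ j < 2 ^ m, b ≤ a i j * ζ * (γ / 2) * R ^ (γ - 2))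
    (hhε : h ≤ ε) (hεT : 2 * ε ≤ T) (hbT : h ^ 2 ≤ 4 * ε ^ 2 * b * T) {p : ℕ} (hp : 3 ≤ p) :
    ∫⁻ y, ENNReal.ofReal (‖pos (2 ^ m) d (2 ^ m) y‖ ^ 2) * gibbs (2 ^ m) d h a f y ≤
      ENNReal.ofReal (d * (16 * ε) + tailConst d p * (T ^ (p + 1) / R ^ (2 * p))) *
        ∫⁻ y, gibbs (2 ^ m) d h a f y := by
  have hm := measurable_gibbs (N := 2 ^ m) h a hf
  have hpos : Measurable (pos (2 ^ m) d (2 ^ m)) := measurable_pos _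
  have hM := momConst_nonneg d p
  have hT0 : 0 < T := hT ▸ by positivity
  have hε : 0 < ε := hh.trans_le hhε
  have h1 := lintegral_confined_le hf hγ0 hγ2 hg hζ ha hh hT hb hba hhε hεT hbT
  have h2 := lintegral_not_confined_le hf hmono ha hh hT hR hp
  have h3 := lintegral_norm_pow_gibbs_le hf hmono ha hh (N := 2 ^ m) (i := 0) (n := 2 ^ m)
    (by positivity) (by simp) p
  rw [hT] at h3
  simp only [zero_add, pos_zero, sub_zero] at h3
  set Z := ∫⁻ y, gibbs (2 ^ m) d h a f y with hZ
  set A := confined (2 ^ m) d R with hA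
  have hAm : MeasurableSet A := measurableSet_confined R
  -- off the confinement region, split `|X|² ≤ R² + |X|^{2p+2} / R^{2p}`
  have hpt : ∀ r : ℝ, 0 ≤ r → r ^ 2 ≤ R ^ 2 + 1 / R ^ (2 * p) * r ^ (2 * (p + 1)) := by
    intro r hr
    rcases le_total r R with hrR | hrR
    · have : r ^ 2 ≤ R ^ 2 := pow_le_pow_left₀ hr hrR 2
      have h4 : 0 ≤ 1 / R ^ (2 * p) * r ^ (2 * (p + 1)) := by positivity
      linarith
    · have h4 : R ^ (2 * p) ≤ r ^ (2 * p) := pow_le_pow_left₀ hR.le hrR _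
      have h5 : r ^ 2 ≤ 1 / R ^ (2 * p) * r ^ (2 * (p + 1)) := by
        rw [one_div, ← div_eq_inv_mul, le_div_iff₀ (by positivity), mul_add, pow_add, mul_comm]
        gcongr
      nlinarith [sq_nonneg R]
  have hc : ∫⁻ y in Aᶜ, ENNReal.ofReal (‖pos (2 ^ m) d (2 ^ m) y‖ ^ 2) * gibbs (2 ^ m) d h a f y ≤
      ENNReal.ofReal (tailConst d p * (T ^ (p + 1) / R ^ (2 * p))) * Z := by
    calc _ ≤ ∫⁻ y in Aᶜ, (ENNReal.ofReal (R ^ 2) * gibbs (2 ^ m) d h a f y +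
          ENNReal.ofReal (1 / R ^ (2 * p)) * (ENNReal.ofReal
            (‖pos (2 ^ m) d (2 ^ m) y‖ ^ (2 * (p + 1))) * gibbs (2 ^ m) d h a f y)) := by
          refine lintegral_mono fun y => ?_
          rw [← mul_assoc, ← add_mul, ← ENNReal.ofReal_mul (by positivity),
            ← ENNReal.ofReal_add (by positivity) (by positivity)]
          exact mul_le_mul_left (ENNReal.ofReal_le_ofReal (hpt _ (norm_nonneg _))) _
      _ ≤ ENNReal.ofReal (R ^ 2) *
            (ENNReal.ofReal (4 * momConst d p * (100 * T / R ^ 2) ^ (p + 1)) * Z) +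
          ENNReal.ofReal (1 / R ^ (2 * p)) * (ENNReal.ofReal (momConst d p * T ^ (p + 1)) * Z) := by
          have hm2 : Measurable fun y => ENNReal.ofReal
              (‖pos (2 ^ m) d (2 ^ m) y‖ ^ (2 * (p + 1))) * gibbs (2 ^ m) d h a f y :=
            (hpos.norm.pow_const _).ennreal_ofReal.mul hm
          rw [lintegral_add_left (hm.const_mul _), lintegral_const_mul _ hm,
            lintegral_const_mul _ hm2]
          exact add_le_add (mul_le_mul_right h2 _)
            (mul_le_mul_right ((setLIntegral_le_lintegral _ _).trans h3) _)
      _ = _ := by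
          rw [← mul_assoc, ← mul_assoc, ← add_mul, ← ENNReal.ofReal_mul (by positivity),
            ← ENNReal.ofReal_mul (by positivity),
            ← ENNReal.ofReal_add (by positivity) (by positivity), tailConst]
          congr 2
          rw [div_pow, mul_pow, ← pow_mul, mul_add 2 p 1, pow_add R]
          field_simp
          ring
  rw [← lintegral_add_compl _ hAm, ENNReal.ofReal_add (by positivity)
    (mul_nonneg (tailConst_nonneg d p) (by positivity)), add_mul]
  exact add_le_add h1 hc

end chaining

/-! ### Passage to continuous time -/

section riemann

/-- Left-endpoint Riemann sums are controlled by the oscillation on the cells. -/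
lemma abs_integral_sub_sum_le {g : ℝ → ℝ} (hg : Continuous g) {N : ℕ} {h T ε : ℝ} (hh : 0 ≤ h)
    (hT : N * h = T)
    (hosc : ∀ i < N, ∀ t ∈ Set.Icc (i * h) ((i + 1) * h), |g t - g (i * h)| ≤ ε) :
    |(∫ t in (0 : ℝ)..T, g t) - ∑ i ∈ Finset.range N, h * g (i * h)| ≤ ε * T := by
  have h1 := intervalIntegral.sum_integral_adjacent_intervals (μ := volume) (f := g)
    (a := fun i : ℕ => i * h) (n := N) fun k _ => hg.intervalIntegrable _ _
  simp only [Nat.cast_zero, zero_mul, hT] at h1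
  rw [← h1, ← Finset.sum_sub_distrib]
  refine (Finset.abs_sum_le_sum_abs _ _).trans ?_
  have h2 : ∀ i ∈ Finset.range N, |(∫ t in (i * h)..((i + 1 : ℕ) * h), g t) - h * g (i * h)| ≤
      ε * h := by
    intro i hi
    have hle : (i : ℝ) * h ≤ (i + 1 : ℕ) * h := by push_cast; nlinarith
    have e1 : h * g (i * h) = ∫ t in (i * h)..((i + 1 : ℕ) * h), g (i * h) := by
      rw [intervalIntegral.integral_const]
      push_cast
      rw [smul_eq_mul]
      ring
    rw [e1, ← intervalIntegral.integral_sub (hg.intervalIntegrable _ _) (by simp)]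
    have h3 := intervalIntegral.norm_integral_le_of_norm_le_const (a := i * h)
      (b := (i + 1 : ℕ) * h) (f := fun t => g t - g (i * h)) (C := ε) fun t ht => by
        rw [Set.uIoc_of_le hle] at ht
        refine hosc i (Finset.mem_range.1 hi) t ⟨ht.1.le, ?_⟩
        have := ht.2
        push_cast at this
        exact this
    refine h3.trans (le_of_eq ?_)
    push_cast
    rw [show ((i : ℝ) + 1) * h - i * h = h by ring, abs_of_nonneg hh]
  refine (Finset.sum_le_sum h2).trans (le_of_eq ?_)
  rw [Finset.sum_const, Finset.card_range, nsmul_eq_mul, ← hT]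
  ring

/-- Convergence of dyadic double Riemann sums. -/
lemma tendsto_double_riemann {K : ℝ → ℝ → ℝ} (hK : Continuous (Function.uncurry K)) {T : ℝ}
    (hT : 0 < T) :
    Filter.Tendsto (fun m : ℕ => ∑ q ∈ Finset.range (2 ^ m) ×ˢ Finset.range (2 ^ m),
        (T / 2 ^ m) ^ 2 * K (q.1 * (T / 2 ^ m)) (q.2 * (T / 2 ^ m)))
      Filter.atTop (nhds (∫ t in Set.Icc (0 : ℝ) T, ∫ s in Set.Icc (0 : ℝ) T, K t s)) := by
  have hii : (∫ t in Set.Icc (0 : ℝ) T, ∫ s in Set.Icc (0 : ℝ) T, K t s) =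
      ∫ t in (0 : ℝ)..T, ∫ s in (0 : ℝ)..T, K t s := by
    simp only [integral_Icc_eq_integral_Ioc, intervalIntegral.integral_of_le hT.le]
  rw [hii]
  have hKt : ∀ t, Continuous (K t) := fun t => hK.comp (by fun_prop : Continuous fun s => (t, s))
  have hG : Continuous fun t => ∫ s in (0 : ℝ)..T, K t s :=
    intervalIntegral.continuous_parametric_intervalIntegral_of_continuous' hK 0 T
  have huc := (isCompact_Icc.prod isCompact_Icc :
    IsCompact (Set.Icc (0 : ℝ) T ×ˢ Set.Icc (0 : ℝ) T)).uniformContinuousOn_of_continuous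
      hK.continuousOn
  rw [Metric.tendsto_atTop]
  intro ε hε
  obtain ⟨δ, hδ, hosc⟩ := Metric.uniformContinuousOn_iff.1 huc (ε / (4 * T ^ 2)) (by positivity)
  have hlim : Filter.Tendsto (fun m : ℕ => T / (2 : ℝ) ^ m) Filter.atTop (nhds 0) :=
    Filter.Tendsto.const_div_atTop (tendsto_pow_atTop_atTop_of_one_lt (by norm_num)) T
  obtain ⟨M, hM⟩ := Filter.eventually_atTop.1 (hlim.eventually (gt_mem_nhds hδ))
  refine ⟨M, fun m hm => ?_⟩
  have hhδ := hM m hm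
  set h := T / (2 : ℝ) ^ m with hh
  have hh0 : 0 < h := by positivity
  have hNT : ((2 ^ m : ℕ) : ℝ) * h = T := by
    rw [hh]
    push_cast
    field_simp
  set η := ε / (4 * T ^ 2) with hη
  have hcell : ∀ i : ℕ, i < 2 ^ m → ∀ t ∈ Set.Icc ((i : ℝ) * h) ((i + 1) * h),
      t ∈ Set.Icc 0 T ∧ (i : ℝ) * h ∈ Set.Icc 0 T ∧ |t - i * h| < δ := by
    intro i hi t ht
    have h1 : ((i : ℝ) + 1) * h ≤ T := by
      rw [← hNT]
      exact mul_le_mul_of_nonneg_right (by exact_mod_cast hi) hh0.le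
    have h2 : (0 : ℝ) ≤ i * h := by positivity
    refine ⟨⟨h2.trans ht.1, ht.2.trans h1⟩, ⟨h2, by linarith⟩, ?_⟩
    rw [abs_of_nonneg (by linarith [ht.1])]
    linarith [ht.2]
  have hO : ∀ t ∈ Set.Icc 0 T, ∀ s ∈ Set.Icc 0 T, ∀ t' ∈ Set.Icc 0 T, ∀ s' ∈ Set.Icc 0 T,
      |t - t'| < δ → |s - s'| < δ → |K t s - K t' s'| ≤ η := by
    intro t ht s hs t' ht' s' hs' h1 h2
    have h3 := hosc (t, s) ⟨ht, hs⟩ (t', s') ⟨ht', hs'⟩ (by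
      rw [Prod.dist_eq]
      exact max_lt h1 h2)
    exact h3.le
  have outer := abs_integral_sub_sum_le hG hh0.le hNT (ε := η * T) fun i hi t ht => by
    obtain ⟨h1, h2, h3⟩ := hcell i hi t ht
    rw [← intervalIntegral.integral_sub ((hKt _).intervalIntegrable _ _)
      ((hKt _).intervalIntegrable _ _)]
    have h4 := intervalIntegral.norm_integral_le_of_norm_le_const (a := 0)
      (b := T) (f := fun s => K t s - K (i * h) s) (C := η) fun s hs => by
        rw [Set.uIoc_of_le hT.le] at hs
        have hs' : s ∈ Set.Icc 0 T := ⟨hs.1.le, hs.2⟩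
        exact hO t h1 s hs' _ h2 s hs' h3 (by simpa using hδ)
    rwa [sub_zero, abs_of_pos hT] at h4
  have inner : ∀ i : ℕ, i < 2 ^ m → |(∫ s in (0 : ℝ)..T, K (i * h) s) -
      ∑ j ∈ Finset.range (2 ^ m), h * K (i * h) (j * h)| ≤ η * T := fun i hi => by
    refine abs_integral_sub_sum_le (hKt _) hh0.le hNT fun j hj s hs => ?_
    obtain ⟨h1, h2, h3⟩ := hcell j hj s hs
    have h4 := (hcell i hi (i * h) ⟨le_rfl, by nlinarith⟩).1
    exact hO _ h4 s h1 _ h4 _ h2 (by simpa using hδ) h3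
  have hsum : |∑ i ∈ Finset.range (2 ^ m), h * (∫ s in (0 : ℝ)..T, K (i * h) s) -
      ∑ q ∈ Finset.range (2 ^ m) ×ˢ Finset.range (2 ^ m), h ^ 2 * K (q.1 * h) (q.2 * h)| ≤
      η * T * T := by
    rw [Finset.sum_product, ← Finset.sum_sub_distrib]
    refine (Finset.abs_sum_le_sum_abs _ _).trans ?_
    have h1 : ∀ i ∈ Finset.range (2 ^ m), |h * (∫ s in (0 : ℝ)..T, K (i * h) s) -
        ∑ j ∈ Finset.range (2 ^ m), h ^ 2 * K (i * h) (j * h)| ≤ h * (η * T) := fun i hi => by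
      have h2 : ∑ j ∈ Finset.range (2 ^ m), h ^ 2 * K (i * h) (j * h) =
          h * ∑ j ∈ Finset.range (2 ^ m), h * K (i * h) (j * h) := by
        rw [Finset.mul_sum]
        exact Finset.sum_congr rfl fun j _ => by ring
      rw [h2, ← mul_sub, abs_mul, abs_of_pos hh0]
      exact mul_le_mul_of_nonneg_left (inner i (Finset.mem_range.1 hi)) hh0.le
    refine (Finset.sum_le_sum h1).trans (le_of_eq ?_)
    rw [Finset.sum_const, Finset.card_range, nsmul_eq_mul, ← mul_assoc, hNT]
    ring
  have hηT : η * T * T = ε / 4 := by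
    rw [hη]
    field_simp
  rw [hηT] at outer hsum
  rw [Real.dist_eq, abs_sub_comm]
  have := abs_sub_le (∫ t in (0 : ℝ)..T, ∫ s in (0 : ℝ)..T, K t s)
    (∑ i ∈ Finset.range (2 ^ m), h * (∫ s in (0 : ℝ)..T, K (i * h) s))
    (∑ q ∈ Finset.range (2 ^ m) ×ˢ Finset.range (2 ^ m), h ^ 2 * K (q.1 * h) (q.2 * h))
  linarith

end riemann

section transfer
variable {d : ℕ} {f : EuclideanSpace ℝ (Fin d) → ℝ} {γ ζ : ℝ}

/-- The interaction energy sampled on the grid of mesh `h`. -/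
def gridEnergy (f : EuclideanSpace ℝ (Fin d) → ℝ) (ξ h : ℝ) (N : ℕ) (ω : PathSpace d) : ℝ :=
  ∑ q ∈ Finset.range N ×ˢ Finset.range N,
    h ^ 2 * (f (ω (q.1 * h) - ω (q.2 * h)) / (1 + |q.1 * h - q.2 * h| ^ ξ))

lemma measurable_eval (t : ℝ) : Measurable fun ω : PathSpace d => ω t :=
  (continuous_eval_const t).measurable

lemma measurable_gridEnergy (hf : Measurable f) (ξ h : ℝ) (N : ℕ) :
    Measurable (gridEnergy f ξ h N) :=
  Finset.measurable_fun_sum _ fun _ _ => Measurable.const_mul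
    ((hf.comp ((measurable_eval _).sub (measurable_eval _))).div_const _) _

lemma gridEnergy_nonneg (hf0 : ∀ z, 0 ≤ f z) (ξ h : ℝ) (N : ℕ) (ω : PathSpace d) :
    0 ≤ gridEnergy f ξ h N ω :=
  Finset.sum_nonneg fun q _ => mul_nonneg (sq_nonneg _) (div_nonneg (hf0 _) (by positivity))

lemma pairEnergy_nonneg (hf0 : ∀ z, 0 ≤ f z) (ξ T : ℝ) (ω : PathSpace d) :
    0 ≤ pairEnergy f ξ T ω :=
  integral_nonneg fun t => integral_nonneg fun s => div_nonneg (hf0 _) (by positivity)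

lemma tendsto_gridEnergy (hfc : Continuous f) {ξ : ℝ} (hξ : 0 < ξ) {T : ℝ} (hT : 0 < T)
    (ω : PathSpace d) :
    Filter.Tendsto (fun m : ℕ => gridEnergy f ξ (T / 2 ^ m) (2 ^ m) ω) Filter.atTop
      (nhds (pairEnergy f ξ T ω)) := by
  refine tendsto_double_riemann (K := fun t s => f (ω t - ω s) / (1 + |t - s| ^ ξ)) ?_ hT
  have h1 : Continuous fun q : ℝ × ℝ => |q.1 - q.2| ^ ξ :=
    (by fun_prop : Continuous fun q : ℝ × ℝ => |q.1 - q.2|).rpow_const fun _ => Or.inr hξ.le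
  have hω := ω.continuous
  refine Continuous.div (by fun_prop) (continuous_const.add h1) fun q => ?_
  have : (0 : ℝ) ≤ |q.1 - q.2| ^ ξ := by positivity
  positivity

lemma measurable_pairEnergy (hfc : Continuous f) {ξ : ℝ} (hξ : 0 < ξ) {T : ℝ} (hT : 0 < T) :
    Measurable (pairEnergy f ξ T) :=
  measurable_of_tendsto_metrizable (fun m => measurable_gridEnergy hfc.measurable ξ (T / 2 ^ m) (2 ^ m))
    (tendsto_pi_nhds.2 fun ω => tendsto_gridEnergy hfc hξ hT ω)

/-- The discrete second moment bound, read on path space. -/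
lemma lintegral_gridEnergy_le (hfm : Measurable f) (hγ0 : 0 < γ) (hγ2 : γ < 2)
    (hmono : ∀ z w : EuclideanSpace ℝ (Fin d), ‖z‖ ≤ ‖w‖ → f z ≤ f w)
    (hg : ∀ z w : EuclideanSpace ℝ (Fin d), ‖z‖ ≤ ‖w‖ → f z - ζ * ‖z‖ ^ γ ≤ f w - ζ * ‖w‖ ^ γ)
    (hζ : 0 ≤ ζ) {α ξ T ε R : ℝ} (hα : 0 ≤ α) (hξ : 0 ≤ ξ) (hT : 0 < T)
    {P : Measure (PathSpace d)} (hP : IsWienerMeasure T P) (hR : 0 < R) (hεT : 2 * ε ≤ T)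
    (hβ : 1 ≤ 4 * ε ^ 2 * (α * ζ * (γ / 2) * R ^ (γ - 2) / (1 + T ^ ξ)) * T) {p : ℕ} (hp : 3 ≤ p)
    {m : ℕ} (hm : T / 2 ^ m ≤ ε) :
    ∫⁻ ω, ENNReal.ofReal (‖ω T‖ ^ 2) *
        ENNReal.ofReal (exp (-α * gridEnergy f ξ (T / 2 ^ m) (2 ^ m) ω)) ∂P ≤
      ENNReal.ofReal (d * (16 * ε) + tailConst d p * (T ^ (p + 1) / R ^ (2 * p))) *
        ∫⁻ ω, ENNReal.ofReal (exp (-α * gridEnergy f ξ (T / 2 ^ m) (2 ^ m) ω)) ∂P := by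
  set h := T / (2 : ℝ) ^ m with hh
  have hh0 : 0 < h := by positivity
  have hNT : ((2 ^ m : ℕ) : ℝ) * h = T := by
    rw [hh]
    push_cast
    field_simp
  set a : ℕ → ℕ → ℝ := fun i j => α * (h ^ 2 / (1 + |i * h - j * h| ^ ξ)) with ha
  have ha0 : ∀ i j, 0 ≤ a i j := fun i j => by positivity
  set β := α * ζ * (γ / 2) * R ^ (γ - 2) / (1 + T ^ ξ) with hβdef
  have hβ0 : 0 ≤ β := by positivity
  have hba : ∀ i < 2 ^ m, ∀ j < 2 ^ m, β * h ^ 2 ≤ a i j * ζ * (γ / 2) * R ^ (γ - 2) := by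
    intro i hi j hj
    have hc : ∀ i : ℕ, i < 2 ^ m → (0 : ℝ) ≤ i * h ∧ i * h ≤ T := fun i hi =>
      ⟨by positivity, by
        rw [← hNT]
        exact mul_le_mul_of_nonneg_right (by exact_mod_cast hi.le) hh0.le⟩
    have h1 : |(i : ℝ) * h - j * h| ≤ T := by
      rw [abs_le]
      constructor <;> linarith [(hc i hi).1, (hc i hi).2, (hc j hj).1, (hc j hj).2]
    have h2 : |(i : ℝ) * h - j * h| ^ ξ ≤ T ^ ξ := rpow_le_rpow (abs_nonneg _) h1 hξ
    have h3 : β * h ^ 2 = α * ζ * (γ / 2) * R ^ (γ - 2) * (h ^ 2 / (1 + T ^ ξ)) := by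
      rw [hβdef]
      ring
    have h4 : a i j * ζ * (γ / 2) * R ^ (γ - 2) =
        α * ζ * (γ / 2) * R ^ (γ - 2) * (h ^ 2 / (1 + |i * h - j * h| ^ ξ)) := by
      rw [ha]
      ring
    rw [h3, h4]
    gcongr
  have hdisc := lintegral_norm_sq_gibbs_le hfm hγ0 hγ2 hmono hg hζ ha0 hh0 hNT hR
    (b := β * h ^ 2) (by positivity) hba hm hεT (by nlinarith [sq_nonneg h]) hp
  obtain ⟨c, hc⟩ := hP.lintegral_gridIncr hh0 hNT
  set G : (Fin (2 ^ m) × Fin d → ℝ) → ENNReal := fun y =>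
    ∏ q ∈ Finset.range (2 ^ m) ×ˢ Finset.range (2 ^ m), ENNReal.ofReal
      (exp (-(a q.1 q.2 * f (pos (2 ^ m) d q.1 y - pos (2 ^ m) d q.2 y)))) with hGdef
  have hpos : ∀ i, Measurable (pos (2 ^ m) d i) := measurable_pos
  have hGm : Measurable G := Finset.measurable_fun_prod _ fun q _ =>
    (((hfm.comp ((hpos _).sub (hpos _))).const_mul _).neg.exp).ennreal_ofReal
  have hXm : Measurable fun y => ENNReal.ofReal (‖pos (2 ^ m) d (2 ^ m) y‖ ^ 2) :=
    ((hpos _).norm.pow_const 2).ennreal_ofReal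
  have hG : ∀ ω, G (gridIncr (2 ^ m) h ω) =
      ENNReal.ofReal (exp (-α * gridEnergy f ξ h (2 ^ m) ω)) := by
    intro ω
    simp only [hGdef]
    rw [← ENNReal.ofReal_prod_of_nonneg fun _ _ => exp_nonneg _, ← exp_sum, gridEnergy,
      Finset.mul_sum]
    congr 2
    refine Finset.sum_congr rfl fun q hq => ?_
    obtain ⟨h1, h2⟩ := Finset.mem_product.1 hq
    rw [pos_gridIncr h ω (Finset.mem_range.1 h1).le, pos_gridIncr h ω (Finset.mem_range.1 h2).le,
      sub_sub_sub_cancel_right]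
    simp only [ha]
    ring
  have e1 : ∫⁻ ω, ENNReal.ofReal (‖ω T‖ ^ 2) *
      ENNReal.ofReal (exp (-α * gridEnergy f ξ h (2 ^ m) ω)) ∂P =
      c * ∫⁻ y, ENNReal.ofReal (‖pos (2 ^ m) d (2 ^ m) y‖ ^ 2) * gibbs (2 ^ m) d h a f y := by
    have h1 := hc (fun y => ENNReal.ofReal (‖pos (2 ^ m) d (2 ^ m) y‖ ^ 2) * G y) (hXm.mul hGm)
    have h2 : ∫⁻ ω, ENNReal.ofReal (‖ω T‖ ^ 2) *
        ENNReal.ofReal (exp (-α * gridEnergy f ξ h (2 ^ m) ω)) ∂P =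
        ∫⁻ ω, ENNReal.ofReal (‖pos (2 ^ m) d (2 ^ m) (gridIncr (2 ^ m) h ω)‖ ^ 2) *
          G (gridIncr (2 ^ m) h ω) ∂P := by
      refine lintegral_congr_ae ?_
      filter_upwards [hP.ae_zero hT.le] with ω hω
      rw [hG, pos_gridIncr h ω le_rfl, hNT, hω, sub_zero]
    rw [h2, h1]
    congr 1
    refine lintegral_congr fun y => ?_
    rw [gibbs, gridAction, mul_assoc, mul_comm (G y)]
  have e2 : ∫⁻ ω, ENNReal.ofReal (exp (-α * gridEnergy f ξ h (2 ^ m) ω)) ∂P =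
      c * ∫⁻ y, gibbs (2 ^ m) d h a f y := by
    simp_rw [← hG]
    rw [hc G hGm]
    congr 1
    refine lintegral_congr fun y => ?_
    rw [gibbs, gridAction, mul_comm (G y)]
  rw [e1, e2, mul_left_comm]
  exact mul_le_mul_right hdisc c

/-- Second moment of the end point under the tilted measure, at fixed time horizon. -/
lemma integral_tiltedPath_le (hfc : Continuous f) (hf0 : ∀ z, 0 ≤ f z) (hγ0 : 0 < γ) (hγ2 : γ < 2)
    (hmono : ∀ z w : EuclideanSpace ℝ (Fin d), ‖z‖ ≤ ‖w‖ → f z ≤ f w)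
    (hg : ∀ z w : EuclideanSpace ℝ (Fin d), ‖z‖ ≤ ‖w‖ → f z - ζ * ‖z‖ ^ γ ≤ f w - ζ * ‖w‖ ^ γ)
    (hζ : 0 ≤ ζ) {α ξ T ε R : ℝ} (hα : 0 ≤ α) (hξ : 0 < ξ) (hT : 0 < T)
    {P : Measure (PathSpace d)} (hP : IsWienerMeasure T P) (hR : 0 < R) (hε : 0 < ε)
    (hεT : 2 * ε ≤ T)
    (hβ : 1 ≤ 4 * ε ^ 2 * (α * ζ * (γ / 2) * R ^ (γ - 2) / (1 + T ^ ξ)) * T)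
    {p : ℕ} (hp : 3 ≤ p) :
    ∫ ω, ‖ω T‖ ^ 2 ∂(tiltedPath P f α ξ T) ≤
      d * (16 * ε) + tailConst d p * (T ^ (p + 1) / R ^ (2 * p)) := by
  have := hP.1
  set B := d * (16 * ε) + tailConst d p * (T ^ (p + 1) / R ^ (2 * p)) with hB
  have hB0 : 0 ≤ B := by
    have := tailConst_nonneg d p
    positivity
  set W : PathSpace d → ℝ := fun ω => exp (-α * pairEnergy f ξ T ω) with hW
  set w : ℕ → PathSpace d → ℝ := fun m ω => exp (-α * gridEnergy f ξ (T / 2 ^ m) (2 ^ m) ω) with hw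
  have hWm : Measurable W := ((measurable_pairEnergy hfc hξ hT).const_mul _).exp
  have hwm : ∀ m, Measurable (w m) := fun m =>
    ((measurable_gridEnergy hfc.measurable ξ _ _).const_mul _).exp
  have hW1 : ∀ ω, W ω ≤ 1 := fun ω => exp_le_one_iff.2 (by
    have := mul_nonneg hα (pairEnergy_nonneg hf0 ξ T ω)
    linarith)
  have hw1 : ∀ m ω, w m ω ≤ 1 := fun m ω => exp_le_one_iff.2 (by
    have := mul_nonneg hα (gridEnergy_nonneg hf0 ξ (T / 2 ^ m) (2 ^ m) ω)
    linarith)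
  have hconv : ∀ ω, Filter.Tendsto (fun m => ENNReal.ofReal (w m ω)) Filter.atTop
      (nhds (ENNReal.ofReal (W ω))) := fun ω =>
    ENNReal.tendsto_ofReal (((tendsto_gridEnergy hfc hξ hT ω).const_mul (-α)).rexp)
  have hXm : Measurable fun ω : PathSpace d => ‖ω T‖ ^ 2 := (measurable_eval T).norm.pow_const 2
  have hXi := hP.integrable_norm_sq T
  -- pass to the limit of vanishing mesh on both sides
  have hlim1 : Filter.Tendsto
      (fun m => ∫⁻ ω, ENNReal.ofReal (‖ω T‖ ^ 2) * ENNReal.ofReal (w m ω) ∂P) Filter.atTop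
      (nhds (∫⁻ ω, ENNReal.ofReal (‖ω T‖ ^ 2) * ENNReal.ofReal (W ω) ∂P)) := by
    refine tendsto_lintegral_of_dominated_convergence (fun ω => ENNReal.ofReal (‖ω T‖ ^ 2))
      (fun m => hXm.ennreal_ofReal.mul (hwm m).ennreal_ofReal) (fun m => ?_) ?_ ?_
    · refine Filter.Eventually.of_forall fun ω => ?_
      refine mul_le_of_le_one_right' ?_
      exact ENNReal.ofReal_le_one.2 (hw1 m ω)
    · exact hXi.lintegral_lt_top.ne
    · exact Filter.Eventually.of_forall fun ω =>
        ENNReal.Tendsto.const_mul (hconv ω) (Or.inr ENNReal.ofReal_ne_top)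
  have hlim2 : Filter.Tendsto (fun m => ENNReal.ofReal B * ∫⁻ ω, ENNReal.ofReal (w m ω) ∂P)
      Filter.atTop (nhds (ENNReal.ofReal B * ∫⁻ ω, ENNReal.ofReal (W ω) ∂P)) := by
    refine ENNReal.Tendsto.const_mul ?_ (Or.inr ENNReal.ofReal_ne_top)
    refine tendsto_lintegral_of_dominated_convergence (fun _ => 1)
      (fun m => (hwm m).ennreal_ofReal) (fun m => ?_) (by simp) ?_
    · exact Filter.Eventually.of_forall fun ω => ENNReal.ofReal_le_one.2 (hw1 m ω)
    · exact Filter.Eventually.of_forall hconv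
  have hmesh : Filter.Tendsto (fun m : ℕ => T / (2 : ℝ) ^ m) Filter.atTop (nhds 0) :=
    Filter.Tendsto.const_div_atTop (tendsto_pow_atTop_atTop_of_one_lt (by norm_num)) T
  have hle := le_of_tendsto_of_tendsto hlim1 hlim2
    ((hmesh.eventually (ge_mem_nhds hε)).mono fun m hm =>
      lintegral_gridEnergy_le hfc.measurable hγ0 hγ2 hmono hg hζ hα hξ.le hT hP hR hεT hβ hp hm)
  have hWi : Integrable W P := Integrable.of_bound hWm.aestronglyMeasurable 1
    (Filter.Eventually.of_forall fun ω => by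
      rw [Real.norm_of_nonneg (exp_nonneg _)]
      exact hW1 ω)
  have hZ : 0 < ∫ ω, W ω ∂P := integral_exp_pos hWi
  have hreal : ∫ ω, W ω * ‖ω T‖ ^ 2 ∂P ≤ B * ∫ ω, W ω ∂P := by
    rw [← ofReal_integral_eq_lintegral_ofReal hWi
      (Filter.Eventually.of_forall fun ω => exp_nonneg _), ← ENNReal.ofReal_mul hB0] at hle
    rw [integral_eq_lintegral_of_nonneg_ae
      (Filter.Eventually.of_forall fun ω => mul_nonneg (exp_nonneg _) (by positivity))
      (hWm.mul hXm).aestronglyMeasurable]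
    refine ENNReal.toReal_le_of_le_ofReal (by positivity) (le_trans (le_of_eq ?_) hle)
    refine lintegral_congr fun ω => ?_
    rw [mul_comm, ENNReal.ofReal_mul (by positivity)]
  rw [tiltedPath, integral_tilted]
  simp only [smul_eq_mul]
  have e : ∀ ω : PathSpace d, exp (-α * pairEnergy f ξ T ω) /
      (∫ ω, exp (-α * pairEnergy f ξ T ω) ∂P) * ‖ω T‖ ^ 2 =
      (∫ ω, W ω ∂P)⁻¹ * (W ω * ‖ω T‖ ^ 2) := fun ω => by
    rw [div_eq_mul_inv]
    ring
  simp_rw [e]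
  rw [integral_const_mul, inv_mul_le_iff₀ hZ]
  linarith

end transfer

/-! ### Radial quasi-convexity and the choice of scales -/

/-- A radial function with convex sublevel sets is a non-decreasing function of the norm. -/
lemma le_of_norm_le_of_quasiconvex {E : Type*} [NormedAddCommGroup E] [NormedSpace ℝ E]
    {g : E → ℝ} (hrad : ∀ z w, ‖z‖ = ‖w‖ → g z = g w) (hqc : ∀ c, Convex ℝ {z | g z ≤ c})
    {z w : E} (hzw : ‖z‖ ≤ ‖w‖) : g z ≤ g w := by
  rcases (norm_nonneg w).eq_or_lt with hw | hw
  · exact (hrad z w (le_antisymm hzw (hw ▸ norm_nonneg z))).le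
  set r := ‖z‖ / ‖w‖ with hr
  have hr0 : 0 ≤ r := by positivity
  have hr1 : r ≤ 1 := (div_le_one hw).2 hzw
  -- the multiple of `w` of norm `‖z‖` lies on the segment from `-w` to `w`
  have h1 : r • w ∈ {z | g z ≤ g w} := by
    have h2 := hqc (g w) (x := -w) (hrad (-w) w (norm_neg w)).le (y := w) (le_refl (g w))
      (a := (1 - r) / 2) (b := (1 + r) / 2) (by linarith) (by linarith) (by ring)
    convert h2 using 1
    module
  rw [hrad z (r • w)]
  · exact h1
  · rw [norm_smul, Real.norm_of_nonneg hr0, hr, div_mul_cancel₀ _ hw.ne']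

section asymptotics
variable {γ ξ κ : ℝ}

/-- The effective confinement strength grows like a power of the time horizon once the cutoff is
chosen as `R = T^{1/2 + κ/4}`. -/
lemma strength_ge (hγ0 : 0 < γ) (hξ : 0 ≤ ξ) (hκ0 : 0 < κ) (hκ : κ = γ / 2 - ξ)
    {A T : ℝ} (hA : 0 ≤ A) (hT : 1 ≤ T) :
    A / 2 * T ^ (κ / 2) ≤ A * (T ^ (1 / 2 + κ / 4)) ^ (γ - 2) / (1 + T ^ ξ) * T := by
  have hT0 : 0 < T := by linarith
  have h1 : 1 ≤ T ^ ξ := one_le_rpow hT hξ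
  have h2 : T ^ (κ / 2) * T ^ ξ ≤ (T ^ (1 / 2 + κ / 4)) ^ (γ - 2) * T := by
    rw [← rpow_mul hT0.le, ← rpow_add hT0, ← rpow_add_one hT0.ne']
    refine rpow_le_rpow_of_exponent_le hT ?_
    nlinarith
  rw [div_mul_eq_mul_div (A * (T ^ (1 / 2 + κ / 4)) ^ (γ - 2)), le_div_iff₀ (by positivity)]
  have h3 : 0 ≤ T ^ (κ / 2) := by positivity
  calc A / 2 * T ^ (κ / 2) * (1 + T ^ ξ) ≤ A / 2 * T ^ (κ / 2) * (2 * T ^ ξ) := by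
        gcongr
        linarith
    _ = A * (T ^ (κ / 2) * T ^ ξ) := by ring
    _ ≤ A * ((T ^ (1 / 2 + κ / 4)) ^ (γ - 2) * T) := mul_le_mul_of_nonneg_left h2 hA
    _ = _ := by ring

/-- The contribution of unconfined paths at the cutoff `R = T^{1/2 + κ/4}`. -/
lemma tail_eq {T : ℝ} (hT : 0 < T) (p : ℕ) :
    T ^ (p + 1) / (T ^ (1 / 2 + κ / 4)) ^ (2 * p) = T ^ (-(κ / 2 * p - 1)) := by
  rw [← rpow_natCast (T ^ (1 / 2 + κ / 4)), ← rpow_mul hT.le, ← rpow_natCast T, ← rpow_sub hT]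
  congr 1
  push_cast
  ring

end asymptotics

/-- Theorem 1.2 (3): for `ξ ∈ (0, γ/2)` the variance tends to `0`. -/
theorem statement4 (d : ℕ) (hd : 1 ≤ d) (γ : ℝ) (hγ0 : 0 < γ) (hγ2 : γ < 2)
    (α : ℝ) (hα : 0 < α) (ξ : ℝ) (hξl : 0 < ξ) (hξu : ξ < γ / 2)
    (f : EuclideanSpace ℝ (Fin d) → ℝ)
    (hfc : Continuous f) (hf0 : ∀ z, 0 ≤ f z)
    (hfrad : ∀ z w : EuclideanSpace ℝ (Fin d), ‖z‖ = ‖w‖ → f z = f w)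
    (ζ : ℝ) (hζ : 0 < ζ)
    (hqc : ∀ c : ℝ, Convex ℝ {z : EuclideanSpace ℝ (Fin d) | f z - ζ * ‖z‖ ^ γ ≤ c})
    (P : ℕ → Measure (PathSpace d))
    (hP : ∀ t : ℕ, IsWienerMeasure ((2:ℝ) ^ t) (P t)) :
    Filter.Tendsto
      (fun t : ℕ => ∫ ω, ‖ω ((2:ℝ) ^ t)‖ ^ 2 ∂(tiltedPath (P t) f α ξ ((2:ℝ) ^ t)))
      Filter.atTop (nhds 0) := by
  have hg : ∀ z w : EuclideanSpace ℝ (Fin d), ‖z‖ ≤ ‖w‖ →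
      f z - ζ * ‖z‖ ^ γ ≤ f w - ζ * ‖w‖ ^ γ := fun z w hzw =>
    le_of_norm_le_of_quasiconvex (g := fun z => f z - ζ * ‖z‖ ^ γ)
      (fun z w h => by simp only [h, hfrad z w h]) hqc hzw
  have hmono : ∀ z w : EuclideanSpace ℝ (Fin d), ‖z‖ ≤ ‖w‖ → f z ≤ f w := fun z w hzw => by
    have h1 := hg z w hzw
    have h2 := mul_le_mul_of_nonneg_left (rpow_le_rpow (norm_nonneg z) hzw hγ0.le) hζ.le
    linarith
  set κ := γ / 2 - ξ with hκ
  have hκ0 : 0 < κ := by linarith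
  set A := α * ζ * (γ / 2) with hA
  have hA0 : 0 < A := by positivity
  -- the moment order is taken large enough for the unconfined contribution to vanish
  set p : ℕ := ⌈2 / κ⌉₊ + 3 with hp
  have hpκ : 0 < κ / 2 * p - 1 := by
    have h1 : 2 / κ < p := by
      have := Nat.le_ceil (2 / κ)
      rw [hp]
      push_cast
      linarith
    rw [div_lt_iff₀ hκ0] at h1
    linarith
  have hT : Filter.Tendsto (fun t : ℕ => (2 : ℝ) ^ t) Filter.atTop Filter.atTop :=
    tendsto_pow_atTop_atTop_of_one_lt (by norm_num)
  have hbound : Filter.Tendsto (fun T : ℝ => d * (16 * T ^ (-(κ / 8))) +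
      tailConst d p * T ^ (-(κ / 2 * p - 1))) Filter.atTop (nhds 0) := by
    have h1 := ((tendsto_rpow_neg_atTop (by positivity : 0 < κ / 8)).const_mul 16).const_mul (d : ℝ)
    have h2 := (tendsto_rpow_neg_atTop hpκ).const_mul (tailConst d p)
    simpa using h1.add h2
  have hgrow : ∀ᶠ T : ℝ in Filter.atTop, 1 ≤ 2 * A * T ^ (κ / 4) :=
    ((tendsto_rpow_atTop (by positivity : 0 < κ / 4)).const_mul_atTop
      (by positivity : 0 < 2 * A)).eventually_ge_atTop 1
  refine squeeze_zero' (Filter.Eventually.of_forall fun t => integral_nonneg fun ω => by positivity)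
    ?_ (hbound.comp hT)
  filter_upwards [hT.eventually hgrow, hT.eventually_ge_atTop 2] with t ht1 ht2
  simp only [Function.comp_apply]
  set T : ℝ := (2 : ℝ) ^ t with hTdef
  have hT0 : 0 < T := by linarith
  have hε1 : T ^ (-(κ / 8)) ≤ 1 := rpow_le_one_of_one_le_of_nonpos (by linarith) (by linarith)
  rw [← tail_eq hT0 p]
  refine integral_tiltedPath_le hfc hf0 hγ0 hγ2 hmono hg hζ.le hα.le hξl hT0 (hP t)
    (by positivity) (by positivity) (by linarith) ?_ (by omega)
  have h1 := strength_ge hγ0 hξl.le hκ0 hκ hA0.le (show 1 ≤ T by linarith)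
  have h2 : (T ^ (-(κ / 8))) ^ 2 * T ^ (κ / 2) = T ^ (κ / 4) := by
    rw [← rpow_natCast, ← rpow_mul hT0.le, ← rpow_add hT0]
    congr 1
    push_cast
    ring
  calc (1 : ℝ) ≤ 2 * A * T ^ (κ / 4) := ht1
    _ = 4 * (T ^ (-(κ / 8))) ^ 2 * (A / 2 * T ^ (κ / 2)) := by
        rw [← h2]
        ring
    _ ≤ _ := by
        rw [mul_assoc _ _ T]
        exact mul_le_mul_of_nonneg_left h1 (by positivity)
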